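/- (Theorem A with explicit constant, for u = Λ_j^{μ,ν}) Assume the integrality condition on (μ,ν) and let j ∈ ℕ. Then for all ϑ, φ ∈ [0,π] with cos ϑ + cos φ > 0, ∫₀^∞ Λ_j^{μ,ν}(x) J̃_{μ/2}(ax) J̃_{ν/2}(bx) x^{μ+ν+1} dx = (−1)^j · (2^{2(μ+ν)} Γ(j+(μ−ν+2)/2))/(π Γ(j+μ+1)) · ((cos ϑ + cos φ)/2)^{(μ+ν+2)/2} · C̃_j^{(μ+1)/2}(cos ϑ) · C̃_{j+(μ−ν)/2}^{(ν+1)/2}(cos φ), where a = sin ϑ/(cos ϑ + cos φ) and b = sin φ/(cos ϑ + cos φ). -/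

import Mathlib

open MeasureTheory Real Filter Set Metric

noncomputable section

/-- Normalized Bessel function of the first kind: `J̃_α(x) = (x/2)^{-α} J_α(x)`,
given by its (entire) power series. -/
def besselJt (α x : ℝ) : ℝ :=
  ∑' m : ℕ, (-1) ^ m / (m.factorial * Real.Gamma (m + α + 1)) * (x / 2) ^ (2 * m)

/-- Bessel function of the first kind `J_α`. -/
def besselJ (α x : ℝ) : ℝ :=
  ∑' m : ℕ, (-1) ^ m / (m.factorial * Real.Gamma (m + α + 1)) * (x / 2) ^ (2 * (m : ℝ) + α)

/-- Normalized modified Bessel function `Ĩ_α(x) = (x/2)^{-α} I_α(x)`,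
given by its (entire, even) power series. -/
def besselIt (α x : ℝ) : ℝ :=
  ∑' m : ℕ, (x / 2) ^ (2 * m) / (m.factorial * Real.Gamma (m + α + 1))

/-- Modified Bessel function of the first kind `I_α`. -/
def besselI (α x : ℝ) : ℝ :=
  ∑' m : ℕ, (x / 2) ^ (2 * (m : ℝ) + α) / (m.factorial * Real.Gamma (m + α + 1))

/-- Modified Bessel function of the second kind,
`K_α(x) = lim_{β→α} (π/2)(I_{−β}(x) − I_β(x))/sin(βπ)`. -/
def besselK (α x : ℝ) : ℝ :=
  limUnder (nhdsWithin α {α}ᶜ) fun β =>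
    Real.pi / 2 * (besselI (-β) x - besselI β x) / Real.sin (β * Real.pi)

/-- Normalized K-Bessel function `K̃_α(x) = (x/2)^{-α} K_α(x)`. -/
def besselKt (α x : ℝ) : ℝ := (x / 2) ^ (-α) * besselK α x

/-- Normalized Gegenbauer polynomial `C̃_n^λ = Γ(λ) C_n^λ`, where `C_n^λ` is defined via the
generating function `(1 − 2xt + t²)^{−λ} = Σ_{n≥0} C_n^λ(x) tⁿ`; explicitly,
`C̃_n^λ(x) = Σ_{k=0}^{⌊n/2⌋} (−1)^k Γ(λ+n−k)/(k!(n−2k)!) (2x)^{n−2k}`.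
This expression also gives the limit value `C̃_n^0 = lim_{λ→0+} Γ(λ) C_n^λ` for `n ≥ 1`. -/
def gegenbauerCt (n : ℕ) (l x : ℝ) : ℝ :=
  ∑ k ∈ Finset.range (n / 2 + 1),
    (-1) ^ k * Real.Gamma (l + n - k) / (k.factorial * (n - 2 * k).factorial)
      * (2 * x) ^ (n - 2 * k)

/-- Laguerre polynomial `L_n^μ(x) = Σ_{k=0}^n (−1)^k binom(n+μ, n−k) x^k/k!`
(with nonnegative integer parameter `μ`). -/
def laguerreL (n μ : ℕ) (x : ℝ) : ℝ :=
  ∑ k ∈ Finset.range (n + 1),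
    (-1) ^ k * (Nat.choose (n + μ) (n - k)) * x ^ k / k.factorial

/-- The Euler operator `θ = x d/dx`. -/
def eulerOp (u : ℝ → ℝ) : ℝ → ℝ := fun x => x * deriv u x

/-- `(θ+c)(θ+c+ν)u − x² u`, i.e. the operator `Q_ν(θ+c)` applied to `u`. -/
def besselQ (ν c : ℝ) (u : ℝ → ℝ) : ℝ → ℝ := fun x =>
  eulerOp (fun y => eulerOp u y + (c + ν) * u y) x
    + c * (eulerOp u x + (c + ν) * u x) - x ^ 2 * u x

/-- The fourth order differential operator
`D_{μ,ν} = x^{−2}((θ+μ)(θ+μ+ν) − x²)(θ(θ+ν) − x²)`. -/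
def Dop (μ ν : ℝ) (u : ℝ → ℝ) : ℝ → ℝ := fun x =>
  besselQ ν μ (besselQ ν 0 u) x / x ^ 2

/-- The generating function
`G^{μ,ν}(t,x) = (1−t)^{−(μ+ν+2)/2} Ĩ_{μ/2}(tx/(1−t)) K̃_{ν/2}(x/(1−t))`. -/
def genFun (μ ν t x : ℝ) : ℝ :=
  (1 - t) ^ (-(μ + ν + 2) / 2) * besselIt (μ / 2) (t * x / (1 - t))
    * besselKt (ν / 2) (x / (1 - t))

/-- The eigenfunctions `Λ_j^{μ,ν}`, defined as the Taylor coefficients in `t` at `t = 0` of the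
generating function `G^{μ,ν}(t,x) = Σ_{j≥0} Λ_j^{μ,ν}(x) t^j`. -/
def LambdaF (μ ν : ℝ) (j : ℕ) (x : ℝ) : ℝ :=
  iteratedDeriv j (fun t => genFun μ ν t x) 0 / j.factorial

/-- The integrality condition: `μ ≥ ν ≥ −1` are integers of the same parity,
not both equal to `−1`. -/
def IntCond (μ ν : ℤ) : Prop :=
  -1 ≤ ν ∧ ν ≤ μ ∧ Even (μ - ν) ∧ ¬(μ = -1 ∧ ν = -1)

end

/-!
In the variable `W = x² / 4` every Bessel factor becomes a value of the entire function
`C_α(w) = ∑ w ^ m / (m! Γ(m + α + 1))`, the Macdonald factor becomes the positive integral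
`½ ∫ s ^ (-β - 1) exp (-s - PW / s) ds`, and the generating function dilates `W` by
`P = (1 - t)⁻²` and `Q = t² (1 - t)⁻²`. Write `y = a²` and `η = b²`, so that `J̃_α(a x)` is
`C_α(-yW)` and `J̃_β(b x)` is `C_β(-ηW)`. Three facts give the theorem.

* Up to terms of order `t ^ (j + 1)`, the product `C_α(QW) C_α(-yW)` is the combination of
  single Bessel functions
  `∑ (-y) ^ i Q ^ i W ^ (2 i) C_{α + 2 i}((Q - y) W) / (i! Γ(i + α + 1))`.
* For `α = β + n` and `M = n + 2 i`, the integral of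
  `W ^ (2 β + M) K_β(PW) C_β(-ηW) C_{β + M}((Q - y) W)` reduces to Weber's integral. It is a
  multiple of the `M`-th derivative at `z = y - Q + P - η` of `z ↦ (z² + 4Pη) ^ (-(β + 1/2))`
  (of `z ↦ log (z² + 4Pη)` when `β = -1/2`), hence of a Gegenbauer polynomial of degree `M`.
* By homogeneity the powers of `1 - t` cancel and that derivative is taken at a point affine in `t`,
  so the `j`-th Taylor coefficient raises every degree `n + 2 i` to `n + j`. One Gegenbauer
  polynomial of degree `n + j` factors out, and the sum over `i` that remains is an expansion of the
  Gegenbauer polynomial of degree `j`.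
-/

/-! ### Families of functions closed under differentiation -/

section DerivFamily

open scoped ContDiff Topology

variable {ι : Type*} {U : Set ℝ} {p q : ℝ → ℝ} {σ τ : ι → ι}

/-- The functions `k i` are permuted by differentiation on `U`, up to the coefficients `p` and `q`:
`k i' = p · k (σ i) + q · k (τ i)`. Bessel type integrands have this shape because differentiation
shifts the order of a Bessel function. -/
def IsDerivFamily (U : Set ℝ) (p q : ℝ → ℝ) (σ τ : ι → ι) (k : ι → ℝ → ℝ) : Prop :=
  ∀ i, ∀ t ∈ U, HasDerivAt (k i) (p t * k (σ i) t + q t * k (τ i) t) t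

lemma contDiffAt_natCast_of_contDiffOn {f : ℝ → ℝ} (hf : ContDiffOn ℝ ∞ f U) (hU : IsOpen U)
    {t : ℝ} (ht : t ∈ U) (j : ℕ) : ContDiffAt ℝ j f t :=
  (hf.contDiffAt (hU.mem_nhds ht)).of_le (by exact_mod_cast le_top)

lemma IsDerivFamily.contDiffOn {k : ι → ℝ → ℝ} (hk : IsDerivFamily U p q σ τ k) (hU : IsOpen U)
    (hp : ContDiffOn ℝ ∞ p U) (hq : ContDiffOn ℝ ∞ q U) (i : ι) : ContDiffOn ℝ ∞ (k i) U := by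
  refine contDiffOn_infty.2 fun m => ?_
  induction m generalizing i with
  | zero =>
    rw [Nat.cast_zero, contDiffOn_zero]
    exact fun t ht => (hk i t ht).continuousAt.continuousWithinAt
  | succ m ih =>
    rw [Nat.cast_succ, contDiffOn_succ_iff_deriv_of_isOpen hU]
    refine ⟨fun t ht => (hk i t ht).differentiableAt.differentiableWithinAt,
      fun h => absurd h (by simp), ?_⟩
    exact (((hp.of_le (by exact_mod_cast le_top)).mul (ih _)).add
      ((hq.of_le (by exact_mod_cast le_top)).mul (ih _))).congr fun t ht => (hk i t ht).deriv

lemma isDerivFamily_of_hasDerivAt {k : ι → ℝ → ℝ} {c : ℝ}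
    (hk : ∀ i, ∀ t ∈ U, HasDerivAt (k i) (c * k (σ i) t) t) :
    IsDerivFamily U (fun _ => c) 0 σ id k :=
  fun i t ht => (hk i t ht).congr_deriv (by simp)

lemma contDiffOn_of_hasDerivAt_shift {k : ι → ℝ → ℝ} {c : ℝ} (hU : IsOpen U)
    (hk : ∀ i, ∀ t ∈ U, HasDerivAt (k i) (c * k (σ i) t) t) (i : ι) : ContDiffOn ℝ ∞ (k i) U :=
  (isDerivFamily_of_hasDerivAt hk).contDiffOn hU contDiffOn_const contDiffOn_const i

lemma iteratedDeriv_of_hasDerivAt_shift {k : ι → ℝ → ℝ} {c : ℝ} (hU : IsOpen U)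
    (hk : ∀ i, ∀ t ∈ U, HasDerivAt (k i) (c * k (σ i) t) t) (m : ℕ) (i : ι) {t : ℝ} (ht : t ∈ U) :
    iteratedDeriv m (k i) t = c ^ m * k (σ^[m] i) t := by
  induction m generalizing i with
  | zero => simp
  | succ m ih =>
    have h : deriv (k i) =ᶠ[𝓝 t] fun s => c * k (σ i) s := by
      filter_upwards [hU.mem_nhds ht] with s hs using (hk i s hs).deriv
    rw [iteratedDeriv_succ', h.iteratedDeriv_eq, iteratedDeriv_const_mul_field, ih,
      Function.iterate_succ_apply, pow_succ']
    ring

lemma IsDerivFamily.iteratedDeriv_succ_mul {k : ι → ℝ → ℝ} (hk : IsDerivFamily U p q σ τ k)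
    (hU : IsOpen U) (hp : ContDiffOn ℝ ∞ p U) (hq : ContDiffOn ℝ ∞ q U) {f : ℝ → ℝ}
    (hf : ContDiffOn ℝ ∞ f U) (j : ℕ) (i : ι) {t : ℝ} (ht : t ∈ U) :
    iteratedDeriv (j + 1) (fun s => f s * k i s) t
      = iteratedDeriv j (fun s => deriv f s * k i s) t
        + iteratedDeriv j (fun s => (f s * p s) * k (σ i) s) t
        + iteratedDeriv j (fun s => (f s * q s) * k (τ i) s) t := by
  have hf' := (contDiffOn_infty_iff_deriv_of_isOpen hU).1 hf
  have hc := hk.contDiffOn hU hp hq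
  have leibniz : deriv (fun s => f s * k i s) =ᶠ[𝓝 t]
      fun s => (deriv f s * k i s + (f s * p s) * k (σ i) s) + (f s * q s) * k (τ i) s := by
    filter_upwards [hU.mem_nhds ht] with s hs
    have hfs : HasDerivAt f (deriv f s) s := (hf'.1.differentiableAt (hU.mem_nhds hs)).hasDerivAt
    exact (hfs.mul (hk i s hs)).deriv.trans (by ring)
  have c₀ := contDiffAt_natCast_of_contDiffOn (hf'.2.mul (hc i)) hU ht j
  have c₁ := contDiffAt_natCast_of_contDiffOn ((hf.mul hp).mul (hc (σ i))) hU ht j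
  have c₂ := contDiffAt_natCast_of_contDiffOn ((hf.mul hq).mul (hc (τ i))) hU ht j
  rw [iteratedDeriv_succ', leibniz.iteratedDeriv_eq, iteratedDeriv_fun_add (c₀.add c₁) c₂,
    iteratedDeriv_fun_add c₀ c₁]

variable {X : Type*} [MeasurableSpace X] {μ : Measure X} {k : ι → ℝ → X → ℝ}

lemma integrable_iteratedDeriv_mul_of_isDerivFamily
    (hk : ∀ᵐ x ∂μ, IsDerivFamily U p q σ τ fun i t => k i t x)
    (hU : IsOpen U) (hp : ContDiffOn ℝ ∞ p U) (hq : ContDiffOn ℝ ∞ q U) {t : ℝ} (ht : t ∈ U)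
    (hint : ∀ i, Integrable (k i t) μ) (j : ℕ) (i : ι) {f : ℝ → ℝ} (hf : ContDiffOn ℝ ∞ f U) :
    Integrable (fun x => iteratedDeriv j (fun s => f s * k i s x) t) μ := by
  induction j generalizing i f with
  | zero => simpa only [iteratedDeriv_zero] using (hint i).const_mul (f t)
  | succ j ih =>
    have hf' := (contDiffOn_infty_iff_deriv_of_isOpen hU).1 hf
    refine (((ih i hf'.2).add (ih (σ i) (hf.mul hp))).add (ih (τ i) (hf.mul hq))).congr ?_
    filter_upwards [hk] with x hx
    exact (hx.iteratedDeriv_succ_mul hU hp hq hf j i ht).symm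

lemma integral_iteratedDeriv_mul_of_isDerivFamily
    (hk : ∀ᵐ x ∂μ, IsDerivFamily U p q σ τ fun i t => k i t x)
    (hK : IsDerivFamily U p q σ τ fun i t => ∫ x, k i t x ∂μ)
    (hU : IsOpen U) (hp : ContDiffOn ℝ ∞ p U) (hq : ContDiffOn ℝ ∞ q U) {t : ℝ} (ht : t ∈ U)
    (hint : ∀ i, Integrable (k i t) μ) (j : ℕ) (i : ι) {f : ℝ → ℝ} (hf : ContDiffOn ℝ ∞ f U) :
    ∫ x, iteratedDeriv j (fun s => f s * k i s x) t ∂μ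
      = iteratedDeriv j (fun s => f s * ∫ x, k i s x ∂μ) t := by
  induction j generalizing i f with
  | zero => simpa only [iteratedDeriv_zero] using integral_const_mul _ _
  | succ j ih =>
    have hf' := (contDiffOn_infty_iff_deriv_of_isOpen hU).1 hf
    have int₀ := integrable_iteratedDeriv_mul_of_isDerivFamily hk hU hp hq ht hint j i hf'.2
    have int₁ := integrable_iteratedDeriv_mul_of_isDerivFamily hk hU hp hq ht hint j (σ i)
      (hf.mul hp)
    have int₂ := integrable_iteratedDeriv_mul_of_isDerivFamily hk hU hp hq ht hint j (τ i)
      (hf.mul hq)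
    have leibniz := hk.mono fun x hx => hx.iteratedDeriv_succ_mul hU hp hq hf j i ht
    rw [hK.iteratedDeriv_succ_mul hU hp hq hf j i ht, ← ih i hf'.2, ← ih (σ i) (hf.mul hp),
      ← ih (τ i) (hf.mul hq), integral_congr_ae leibniz, ← integral_add int₀ int₁]
    exact integral_add (int₀.add int₁) int₂

lemma isDerivFamily_integral_of_locally_dominated
    (hk : ∀ᵐ x ∂μ, IsDerivFamily U p q σ τ fun i t => k i t x)
    (hU : IsOpen U) (hp : ContinuousOn p U) (hq : ContinuousOn q U)
    (hmeas : ∀ i, ∀ t ∈ U, AEStronglyMeasurable (k i t) μ)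
    (hdom : ∀ i, ∀ t ∈ U, ∃ V ∈ 𝓝 t, ∃ b : X → ℝ, Integrable b μ ∧
      ∀ᵐ x ∂μ, ∀ s ∈ V, ‖k i s x‖ ≤ b x) :
    IsDerivFamily U p q σ τ fun i t => ∫ x, k i t x ∂μ := by
  have hint : ∀ i, ∀ t ∈ U, Integrable (k i t) μ := fun i t ht => by
    obtain ⟨V, hV, b, hb, hkb⟩ := hdom i t ht
    exact hb.mono' (hmeas i t ht) (hkb.mono fun x hx => hx t (mem_of_mem_nhds hV))
  have locally_bounded : ∀ {g : ℝ → ℝ} {t : ℝ}, ContinuousOn g U → t ∈ U →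
      {s | ‖g s‖ < ‖g t‖ + 1} ∈ 𝓝 t := fun hg ht =>
    (hg.continuousAt (hU.mem_nhds ht)).norm.eventually_lt_const (lt_add_one _)
  intro i t ht
  obtain ⟨V₁, hV₁, b₁, hb₁, hkb₁⟩ := hdom (σ i) t ht
  obtain ⟨V₂, hV₂, b₂, hb₂, hkb₂⟩ := hdom (τ i) t ht
  have hd := hasDerivAt_integral_of_dominated_loc_of_deriv_le (μ := μ) (F := k i)
    (F' := fun t x => p t * k (σ i) t x + q t * k (τ i) t x)
    (bound := fun x => (‖p t‖ + 1) * b₁ x + (‖q t‖ + 1) * b₂ x)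
    (inter_mem (inter_mem (hU.mem_nhds ht) (inter_mem hV₁ hV₂))
      (inter_mem (locally_bounded hp ht) (locally_bounded hq ht)))
    (by filter_upwards [hU.mem_nhds ht] with s hs using hmeas i s hs) (hint i t ht)
    (((hmeas _ t ht).const_mul _).add ((hmeas _ t ht).const_mul _))
    (by
      filter_upwards [hkb₁, hkb₂] with x h₁ h₂ s ⟨⟨_, hs₁, hs₂⟩, hps, hqs⟩
      refine (norm_add_le _ _).trans (add_le_add ?_ ?_)
      · rw [norm_mul]
        exact mul_le_mul (le_of_lt hps) (h₁ s hs₁) (norm_nonneg _) (by positivity)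
      · rw [norm_mul]
        exact mul_le_mul (le_of_lt hqs) (h₂ s hs₂) (norm_nonneg _) (by positivity))
    ((hb₁.const_mul _).add (hb₂.const_mul _))
    (by filter_upwards [hk] with x hx s hs using hx i s hs.1.1)
  refine hd.2.congr_deriv ?_
  rw [integral_add ((hint _ t ht).const_mul _) ((hint _ t ht).const_mul _), integral_const_mul,
    integral_const_mul]

end DerivFamily

/-! ### Jets at the origin -/

section Jets

open scoped ContDiff Topology

lemma iteratedDeriv_pow_mul_zero (k j : ℕ) {g : ℝ → ℝ} (hg : ContDiffAt ℝ j g 0) :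
    iteratedDeriv j (fun t => t ^ k * g t) 0
      = (j.choose k : ℝ) * k.factorial * iteratedDeriv (j - k) g 0 := by
  rw [iteratedDeriv_fun_mul (by fun_prop) hg]
  simp only [iteratedDeriv_fun_pow_zero]
  rw [Finset.sum_eq_single k]
  · simp
  · intro i _ hik
    simp [hik]
  · intro hk
    rw [Nat.choose_eq_zero_of_lt (by simpa using hk)]
    simp

variable {U : Set ℝ} {Q g : ℝ → ℝ} {t : ℝ}

lemma iteratedDeriv_succ_mul_comp {r : ℝ → ℝ} (hU : IsOpen U) (hQ : ContDiffOn ℝ ∞ Q U)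
    (hg : ContDiffOn ℝ ∞ g U) (hr : ContDiff ℝ ∞ r) (ht : t ∈ U) (j : ℕ) :
    iteratedDeriv (j + 1) (fun s => g s * r (Q s)) t
      = iteratedDeriv j (fun s => deriv g s * r (Q s)) t
        + iteratedDeriv j (fun s => (g s * deriv Q s) * deriv r (Q s)) t := by
  have hQ' := (contDiffOn_infty_iff_deriv_of_isOpen hU).1 hQ
  have hg' := (contDiffOn_infty_iff_deriv_of_isOpen hU).1 hg
  have hr' := contDiff_infty_iff_deriv.1 hr
  have leibniz : deriv (fun s => g s * r (Q s)) =ᶠ[𝓝 t]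
      fun s => deriv g s * r (Q s) + (g s * deriv Q s) * deriv r (Q s) := by
    filter_upwards [hU.mem_nhds ht] with s hs
    have dg : HasDerivAt g (deriv g s) s := (hg'.1.differentiableAt (hU.mem_nhds hs)).hasDerivAt
    have dQ : HasDerivAt Q (deriv Q s) s := (hQ'.1.differentiableAt (hU.mem_nhds hs)).hasDerivAt
    have dr : HasDerivAt r (deriv r (Q s)) (Q s) := (hr'.1 _).hasDerivAt
    refine (dg.mul (dr.comp s dQ)).deriv.trans ?_
    simp only [Function.comp_apply]
    ring
  have c₁ : ContDiffAt ℝ j (fun s => deriv g s * r (Q s)) t :=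
    contDiffAt_natCast_of_contDiffOn (hg'.2.mul (hr.comp_contDiffOn hQ)) hU ht j
  have c₂ : ContDiffAt ℝ j (fun s => (g s * deriv Q s) * deriv r (Q s)) t :=
    contDiffAt_natCast_of_contDiffOn ((hg.mul hQ'.2).mul (hr'.2.comp_contDiffOn hQ)) hU ht j
  rw [iteratedDeriv_succ', leibniz.iteratedDeriv_eq, iteratedDeriv_fun_add c₁ c₂]

lemma iteratedDeriv_mul_comp_congr {r₁ r₂ : ℝ → ℝ} (hU : IsOpen U) (hQ : ContDiffOn ℝ ∞ Q U)
    (hg : ContDiffOn ℝ ∞ g U) (hr₁ : ContDiff ℝ ∞ r₁) (hr₂ : ContDiff ℝ ∞ r₂) (ht : t ∈ U) {j : ℕ}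
    (hjet : ∀ l ≤ j, iteratedDeriv l r₁ (Q t) = iteratedDeriv l r₂ (Q t)) :
    iteratedDeriv j (fun s => g s * r₁ (Q s)) t = iteratedDeriv j (fun s => g s * r₂ (Q s)) t := by
  have hQ' := (contDiffOn_infty_iff_deriv_of_isOpen hU).1 hQ
  induction j generalizing r₁ r₂ g with
  | zero => simpa only [iteratedDeriv_zero] using congrArg (g t * ·) (hjet 0 le_rfl)
  | succ j ih =>
    rw [iteratedDeriv_succ_mul_comp hU hQ hg hr₁ ht, iteratedDeriv_succ_mul_comp hU hQ hg hr₂ ht,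
      ih ((contDiffOn_infty_iff_deriv_of_isOpen hU).1 hg).2 hr₁ hr₂ fun l hl => hjet l (by omega),
      ih (hg.mul hQ'.2) (contDiff_infty_iff_deriv.1 hr₁).2 (contDiff_infty_iff_deriv.1 hr₂).2
        fun l hl => by simpa only [iteratedDeriv_succ'] using hjet (l + 1) (by omega)]

end Jets

/-! ### The Bessel–Clifford functions -/

section BesselClifford

open scoped ContDiff

/-- Taylor coefficients `1 / (m! Γ(m + α + 1))` of the Bessel–Clifford function. -/
noncomputable def besselCliffordCoeff (α : ℝ) (m : ℕ) : ℝ :=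
  1 / (m.factorial * Real.Gamma (m + α + 1))

/-- The Bessel–Clifford function `𝒞_α`, an entire function that parametrizes both normalized Bessel
functions by the square of their argument: `Ĩ_α(x) = 𝒞_α(x²/4)` and `J̃_α(x) = 𝒞_α(-x²/4)`. -/
noncomputable def besselClifford (α w : ℝ) : ℝ := ∑' m : ℕ, besselCliffordCoeff α m * w ^ m

lemma one_div_Gamma_eq_mul_one_div_Gamma_add_one (z : ℝ) :
    1 / Real.Gamma z = z * (1 / Real.Gamma (z + 1)) := by
  rcases eq_or_ne z 0 with rfl | hz
  · simp
  · rw [Real.Gamma_add_one hz, mul_one_div, ← div_div, div_self hz]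

lemma succ_mul_besselCliffordCoeff_succ (α : ℝ) (m : ℕ) :
    ((m : ℝ) + 1) * besselCliffordCoeff α (m + 1) = besselCliffordCoeff (α + 1) m := by
  have hm : ((m : ℝ) + 1) ≠ 0 := by positivity
  unfold besselCliffordCoeff
  rw [show ((m + 1 : ℕ) : ℝ) + α + 1 = m + (α + 1) + 1 by push_cast; ring, Nat.factorial_succ]
  push_cast
  rw [mul_one_div, mul_assoc, ← div_div, div_self hm]

lemma add_mul_besselCliffordCoeff_add_one (α : ℝ) (m : ℕ) :
    ((m : ℝ) + α + 1) * besselCliffordCoeff (α + 1) m = besselCliffordCoeff α m := by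
  unfold besselCliffordCoeff
  rw [← one_div_mul_one_div, ← one_div_mul_one_div,
    one_div_Gamma_eq_mul_one_div_Gamma_add_one (m + α + 1), ← add_assoc (m : ℝ) α 1]
  ring

lemma besselCliffordCoeff_eq_mul_succ (α : ℝ) (m : ℕ) :
    besselCliffordCoeff α m
      = ((m : ℝ) + 1) * (m + α + 1) * besselCliffordCoeff α (m + 1) := by
  rw [← add_mul_besselCliffordCoeff_add_one, ← succ_mul_besselCliffordCoeff_succ]
  ring

lemma besselCliffordCoeff_pos {α : ℝ} (hα : -1 < α) (m : ℕ) : 0 < besselCliffordCoeff α m := by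
  have : 0 < Real.Gamma (m + α + 1) := Real.Gamma_pos_of_pos (by linarith)
  unfold besselCliffordCoeff
  positivity

lemma summable_norm_besselClifford (α w : ℝ) :
    Summable fun m : ℕ => ‖besselCliffordCoeff α m * w ^ m‖ := by
  refine Summable.norm ?_
  refine summable_of_ratio_norm_eventually_le (r := 1 / 2) (by norm_num) ?_
  obtain ⟨N, hN⟩ := exists_nat_ge (|α| + 2 * |w| + 1)
  filter_upwards [eventually_ge_atTop N] with m hm
  have hm' : (N : ℝ) ≤ m := by exact_mod_cast hm
  have hα := neg_abs_le α
  have hw := abs_nonneg w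
  have hratio : 2 * |w| ≤ ((m : ℝ) + 1) * (m + α + 1) := by nlinarith [abs_nonneg α]
  have hnorm : ‖((m : ℝ) + 1) * (m + α + 1)‖ = ((m : ℝ) + 1) * (m + α + 1) :=
    Real.norm_of_nonneg (by linarith)
  rw [besselCliffordCoeff_eq_mul_succ α m, norm_mul, norm_mul, norm_mul, pow_succ, norm_mul, hnorm,
    Real.norm_eq_abs w]
  have : 0 ≤ ‖besselCliffordCoeff α (m + 1)‖ * ‖w ^ m‖ := by positivity
  nlinarith

lemma summable_besselClifford (α w : ℝ) : Summable fun m : ℕ => besselCliffordCoeff α m * w ^ m :=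
  (summable_norm_besselClifford α w).of_norm

lemma hasSum_besselClifford (α w : ℝ) :
    HasSum (fun m : ℕ => besselCliffordCoeff α m * w ^ m) (besselClifford α w) :=
  (summable_besselClifford α w).hasSum

lemma hasDerivAt_besselClifford (α w : ℝ) :
    HasDerivAt (besselClifford α) (besselClifford (α + 1) w) w := by
  set r := |w| + 1
  have hr : 0 < r := by positivity
  have shift (y : ℝ) : (fun m : ℕ =>
        besselCliffordCoeff α (m + 1) * (((m + 1 : ℕ) : ℝ) * y ^ (m + 1 - 1)))
      = fun m => besselCliffordCoeff (α + 1) m * y ^ m := by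
    ext m
    rw [← succ_mul_besselCliffordCoeff_succ, Nat.add_sub_cancel]
    push_cast
    ring
  have hsum (y : ℝ) : Summable fun m : ℕ => ‖besselCliffordCoeff α m * (m * y ^ (m - 1))‖ := by
    rw [← summable_nat_add_iff 1]
    exact (summable_norm_besselClifford (α + 1) y).congr fun m => by
      rw [← congrFun (shift y) m]
  have hd := hasDerivAt_tsum_of_isPreconnected (hsum r) Metric.isOpen_ball
    (convex_ball (0 : ℝ) r).isPreconnected
    (fun m y _ => (hasDerivAt_pow m y).const_mul (besselCliffordCoeff α m))
    (fun m y hy => by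
      rw [mem_ball_zero_iff] at hy
      rw [norm_mul, norm_mul, norm_mul, norm_mul, norm_pow, norm_pow, Real.norm_of_nonneg hr.le]
      gcongr)
    (Metric.mem_ball_self hr) (summable_besselClifford α 0) (y := w)
    (by rw [mem_ball_zero_iff, Real.norm_eq_abs]; exact lt_add_one _)
  refine hd.congr_deriv ?_
  rw [← (hsum w).of_norm.sum_add_tsum_nat_add 1, shift w]
  simp [besselClifford]

lemma contDiff_besselClifford (α : ℝ) : ContDiff ℝ ∞ (besselClifford α) :=
  contDiffOn_univ.1 <| contDiffOn_of_hasDerivAt_shift (σ := (· + 1)) (c := 1) isOpen_univ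
    (fun a t _ => (hasDerivAt_besselClifford a t).congr_deriv (one_mul _).symm) α

@[fun_prop]
lemma continuous_besselClifford (α : ℝ) : Continuous (besselClifford α) :=
  (contDiff_besselClifford α).continuous

lemma iteratedDeriv_besselClifford (m : ℕ) (α w : ℝ) :
    iteratedDeriv m (besselClifford α) w = besselClifford (α + m) w := by
  rw [iteratedDeriv_of_hasDerivAt_shift (σ := (· + 1)) (c := 1) isOpen_univ
    (fun a t _ => (hasDerivAt_besselClifford a t).congr_deriv (one_mul _).symm) m α (mem_univ w)]
  simp

lemma besselClifford_recurrence (α w : ℝ) :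
    w * besselClifford (α + 2) w + (α + 1) * besselClifford (α + 1) w = besselClifford α w := by
  have h₁ : HasSum (fun m : ℕ => (m : ℝ) * (besselCliffordCoeff (α + 1) m * w ^ m))
      (w * besselClifford (α + 2) w) := by
    rw [← hasSum_nat_add_iff' 1, Finset.sum_range_one, Nat.cast_zero, zero_mul, sub_zero]
    refine ((hasSum_besselClifford (α + 2) w).mul_left w).congr_fun fun m => ?_
    rw [show α + 2 = (α + 1) + 1 by ring, ← succ_mul_besselCliffordCoeff_succ (α + 1)]
    push_cast
    ring
  refine (h₁.add ((hasSum_besselClifford (α + 1) w).mul_left (α + 1))).unique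
    ((hasSum_besselClifford α w).congr_fun fun m => ?_)
  rw [← add_mul_besselCliffordCoeff_add_one α m]
  ring

lemma besselClifford_zero (α : ℝ) : besselClifford α 0 = 1 / Real.Gamma (α + 1) := by
  rw [besselClifford, tsum_eq_single 0 fun m hm => by simp [hm]]
  simp [besselCliffordCoeff]

/-- The energy whose decay bounds the oscillating Bessel–Clifford function `v ↦ 𝒞_α(-v)`. -/
noncomputable def besselCliffordEnergy (α v : ℝ) : ℝ :=
  besselClifford α (-v) ^ 2 + v * besselClifford (α + 1) (-v) ^ 2

lemma hasDerivAt_besselCliffordEnergy (α v : ℝ) :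
    HasDerivAt (besselCliffordEnergy α)
      (-(2 * α + 1) * besselClifford (α + 1) (-v) ^ 2) v := by
  have hd (a : ℝ) : HasDerivAt (fun v => besselClifford a (-v)) (-besselClifford (a + 1) (-v)) v :=
    ((hasDerivAt_besselClifford a (-v)).comp v (hasDerivAt_neg v)).congr_deriv (by ring)
  have hrec := besselClifford_recurrence α (-v)
  refine (((hd α).pow 2).add ((hasDerivAt_id v).mul ((hd (α + 1)).pow 2))).congr_deriv ?_
  rw [show α + 1 + 1 = α + 2 by ring]
  simp only [id, Pi.pow_apply]
  rw [← hrec]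
  push_cast
  ring

lemma antitone_besselCliffordEnergy {α : ℝ} (hα : -1 / 2 ≤ α) :
    Antitone (besselCliffordEnergy α) := by
  refine antitone_of_deriv_nonpos
    (fun v => (hasDerivAt_besselCliffordEnergy α v).differentiableAt) fun v => ?_
  rw [(hasDerivAt_besselCliffordEnergy α v).deriv]
  exact mul_nonpos_of_nonpos_of_nonneg (by linarith) (sq_nonneg _)

lemma abs_besselClifford_neg_le {α : ℝ} (hα : -1 / 2 ≤ α) {w : ℝ} (hw : 0 ≤ w) :
    |besselClifford α (-w)| ≤ 1 / Real.Gamma (α + 1) := by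
  have hΓ : 0 < Real.Gamma (α + 1) := Real.Gamma_pos_of_pos (by linarith)
  refine abs_le_of_sq_le_sq ?_ (by positivity)
  calc besselClifford α (-w) ^ 2
      ≤ besselCliffordEnergy α w := le_add_of_nonneg_right (by positivity)
    _ ≤ besselCliffordEnergy α 0 := antitone_besselCliffordEnergy hα hw
    _ = (1 / Real.Gamma (α + 1)) ^ 2 := by
      simp [besselCliffordEnergy, besselClifford_zero]

lemma sq_div_four_pow (x : ℝ) (m : ℕ) : (x ^ 2 / 4) ^ m = (x / 2) ^ (2 * m) := by
  rw [pow_mul]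
  congr 1
  ring

lemma besselJt_eq_besselClifford (α x : ℝ) :
    besselJt α x = besselClifford α (-(x ^ 2 / 4)) := by
  unfold besselJt besselClifford besselCliffordCoeff
  congr 1 with m
  rw [neg_pow (x ^ 2 / 4), sq_div_four_pow]
  ring

lemma besselIt_eq_besselClifford (α x : ℝ) : besselIt α x = besselClifford α (x ^ 2 / 4) := by
  unfold besselIt besselClifford besselCliffordCoeff
  congr 1 with m
  rw [sq_div_four_pow]
  ring

lemma besselI_eq_rpow_mul_besselClifford (α : ℝ) {x : ℝ} (hx : 0 < x) :
    besselI α x = (x / 2) ^ α * besselClifford α (x ^ 2 / 4) := by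
  unfold besselI besselClifford besselCliffordCoeff
  rw [← tsum_mul_left]
  congr 1 with m
  rw [sq_div_four_pow, Real.rpow_add (by positivity), ← Real.rpow_natCast]
  push_cast
  ring

end BesselClifford

/-! ### The Macdonald function and its integral representation -/

section Macdonald

open scoped ContDiff Topology

/-- The integrand in the integral representation of the Macdonald function. -/
noncomputable def macdonaldKernel (β v s : ℝ) : ℝ := s ^ (-β - 1) * Real.exp (-s - v / s)

/-- The Macdonald function `𝒦_β`, which parametrizes the normalized Bessel function `K̃_β` by the
square of its argument: `K̃_β(x) = 𝒦_β(x²/4)`. The integral is meaningful for `0 < v`, and for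
`v = 0` if moreover `β < 0`. -/
noncomputable def macdonald (β v : ℝ) : ℝ := 1 / 2 * ∫ s in Ioi 0, macdonaldKernel β v s

lemma macdonaldKernel_pos (β v : ℝ) {s : ℝ} (hs : 0 < s) : 0 < macdonaldKernel β v s := by
  unfold macdonaldKernel
  positivity

lemma aestronglyMeasurable_macdonaldKernel (β v : ℝ) {μ : Measure ℝ} :
    AEStronglyMeasurable (macdonaldKernel β v) μ := by
  have : Measurable (macdonaldKernel β v) := by
    unfold macdonaldKernel
    fun_prop
  exact this.aestronglyMeasurable

lemma macdonaldKernel_anti (β : ℝ) {v v' s : ℝ} (hs : 0 < s) (h : v ≤ v') :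
    macdonaldKernel β v' s ≤ macdonaldKernel β v s := by
  unfold macdonaldKernel
  gcongr

lemma macdonaldKernel_zero (β s : ℝ) :
    macdonaldKernel β 0 s = Real.exp (-s) * s ^ (-β - 1) := by
  rw [macdonaldKernel, zero_div, sub_zero, mul_comm]

lemma integrableOn_macdonaldKernel_zero {β : ℝ} (hβ : β < 0) :
    IntegrableOn (macdonaldKernel β 0) (Ioi 0) :=
  (Real.GammaIntegral_convergent (neg_pos.2 hβ)).congr_fun
    (fun s _ => (macdonaldKernel_zero β s).symm) measurableSet_Ioi

/-- The factor `exp(-v/s)` absorbs any power of `1/s`, at the price of a power of `1/v`. -/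
lemma macdonaldKernel_le_mul_shift (β : ℝ) {v : ℝ} (hv : 0 < v) (N : ℕ) {s : ℝ} (hs : 0 < s) :
    macdonaldKernel β v s ≤ N.factorial / v ^ N * macdonaldKernel (β - N) 0 s := by
  have hexp : Real.exp (-(v / s)) ≤ N.factorial * (s / v) ^ N := by
    rw [Real.exp_neg]
    calc (Real.exp (v / s))⁻¹ ≤ ((v / s) ^ N / N.factorial)⁻¹ :=
          inv_anti₀ (by positivity) (Real.pow_div_factorial_le_exp _ (by positivity) N)
      _ = N.factorial * (s / v) ^ N := by
          rw [inv_div, div_eq_mul_inv, ← inv_pow, inv_div]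
  have hpow : s ^ (-(β - N) - 1) = s ^ (-β - 1) * s ^ N := by
    rw [← Real.rpow_natCast, ← Real.rpow_add hs]
    ring_nf
  calc macdonaldKernel β v s = s ^ (-β - 1) * (Real.exp (-s) * Real.exp (-(v / s))) := by
        rw [macdonaldKernel, ← Real.exp_add, sub_eq_add_neg (-s)]
    _ ≤ s ^ (-β - 1) * (Real.exp (-s) * (N.factorial * (s / v) ^ N)) := by gcongr
    _ = N.factorial / v ^ N * macdonaldKernel (β - N) 0 s := by
        rw [macdonaldKernel_zero, hpow, div_pow]
        ring

lemma integrableOn_macdonaldKernel (β : ℝ) {v : ℝ} (hv : 0 < v) :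
    IntegrableOn (macdonaldKernel β v) (Ioi 0) := by
  obtain ⟨N, hN⟩ := exists_nat_gt β
  refine Integrable.mono' ((integrableOn_macdonaldKernel_zero (sub_neg.2 hN)).const_mul
    (N.factorial / v ^ N : ℝ)) (aestronglyMeasurable_macdonaldKernel β v) ?_
  filter_upwards [ae_restrict_mem measurableSet_Ioi] with s hs
  rw [Real.norm_of_nonneg (macdonaldKernel_pos β v hs).le]
  exact macdonaldKernel_le_mul_shift β hv N hs

lemma macdonald_nonneg (β v : ℝ) : 0 ≤ macdonald β v :=
  mul_nonneg (by norm_num) <| setIntegral_nonneg measurableSet_Ioi fun _ hs =>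
    (macdonaldKernel_pos β v hs).le

lemma macdonald_anti (β : ℝ) {v v' : ℝ} (hv : 0 < v) (h : v ≤ v') :
    macdonald β v' ≤ macdonald β v :=
  mul_le_mul_of_nonneg_left (setIntegral_mono_on
    (integrableOn_macdonaldKernel β (hv.trans_le h)) (integrableOn_macdonaldKernel β hv)
    measurableSet_Ioi fun _ hs => macdonaldKernel_anti β hs h) (by norm_num)

lemma hasDerivAt_macdonaldKernel (β v : ℝ) {s : ℝ} (hs : 0 < s) :
    HasDerivAt (fun v => macdonaldKernel β v s) (-macdonaldKernel (β + 1) v s) v := by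
  have hexp : HasDerivAt (fun v => -s - v / s) (-(1 / s)) v :=
    ((hasDerivAt_id v).div_const s).const_sub (-s)
  refine (hexp.exp.const_mul (s ^ (-β - 1))).congr_deriv ?_
  rw [macdonaldKernel, show -β - 1 = -(β + 1) - 1 + 1 by ring, Real.rpow_add_one hs.ne']
  field_simp

lemma hasDerivAt_macdonald (β : ℝ) {v : ℝ} (hv : 0 < v) :
    HasDerivAt (macdonald β) (-macdonald (β + 1) v) v := by
  have hk : ∀ᵐ s ∂volume.restrict (Ioi (0 : ℝ)), IsDerivFamily (Ioi 0) (fun _ => -1) (fun _ => 0)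
      (· + 1) id fun b v => macdonaldKernel b v s := by
    filter_upwards [ae_restrict_mem measurableSet_Ioi] with s hs b v _
    exact (hasDerivAt_macdonaldKernel b v hs).congr_deriv (by ring)
  have hd := isDerivFamily_integral_of_locally_dominated hk isOpen_Ioi continuousOn_const
    continuousOn_const (fun b v _ => aestronglyMeasurable_macdonaldKernel b v) fun b v hv => by
      rw [mem_Ioi] at hv
      refine ⟨Ioi (v / 2), Ioi_mem_nhds (by linarith), macdonaldKernel b (v / 2),
        integrableOn_macdonaldKernel b (by linarith), ?_⟩
      filter_upwards [ae_restrict_mem measurableSet_Ioi] with s hs u hu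
      rw [Real.norm_of_nonneg (macdonaldKernel_pos b u hs).le]
      exact macdonaldKernel_anti b hs hu.le
  exact ((hd β v hv).const_mul (1 / 2)).congr_deriv (by unfold macdonald; ring)

lemma contDiffOn_macdonald (β : ℝ) : ContDiffOn ℝ ∞ (macdonald β) (Ioi 0) :=
  contDiffOn_of_hasDerivAt_shift (σ := (· + 1)) (c := -1) isOpen_Ioi
    (fun b _ hv => (hasDerivAt_macdonald b hv).congr_deriv (neg_one_mul _).symm) β

lemma macdonaldKernel_mul_inv (β : ℝ) {v s : ℝ} (hv : 0 < v) (hs : 0 < s) :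
    s ^ (-2 : ℝ) * macdonaldKernel β v (v * s⁻¹)
      = v ^ (-β - 1) * macdonaldKernel (-β) v s := by
  have hexp : -(v * s⁻¹) - v / (v * s⁻¹) = -s - v / s := by
    field_simp
    ring
  have hpow : s ^ (-2 : ℝ) * s ^ (-(-β - 1)) = s ^ (-(-β) - 1) := by
    rw [← Real.rpow_add hs]
    ring_nf
  rw [macdonaldKernel, macdonaldKernel, hexp, Real.mul_rpow hv.le (by positivity),
    Real.inv_rpow hs.le, ← Real.rpow_neg hs.le, ← hpow]
  ring

/-- Substitute `s ↦ v / s`. -/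
lemma macdonald_neg (β : ℝ) {v : ℝ} (hv : 0 < v) : macdonald (-β) v = v ^ β * macdonald β v := by
  have hsubst : v ^ (-β - 1) * ∫ s in Ioi 0, macdonaldKernel (-β) v s
      = v⁻¹ * ∫ s in Ioi 0, macdonaldKernel β v s := by
    calc v ^ (-β - 1) * ∫ s in Ioi 0, macdonaldKernel (-β) v s
        = ∫ s in Ioi (0 : ℝ), (|(-1 : ℝ)| * s ^ ((-1 : ℝ) - 1))
            • macdonaldKernel β v (v * s ^ (-1 : ℝ)) := by
          rw [← integral_const_mul]
          refine setIntegral_congr_fun measurableSet_Ioi fun s hs => ?_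
          simp only [abs_neg, abs_one, one_mul, smul_eq_mul, Real.rpow_neg_one]
          rw [← macdonaldKernel_mul_inv β hv hs]
          norm_num
      _ = ∫ s in Ioi 0, macdonaldKernel β v (v * s) :=
          integral_comp_rpow_Ioi (fun s => macdonaldKernel β v (v * s)) (by norm_num)
      _ = v⁻¹ * ∫ s in Ioi 0, macdonaldKernel β v s := by
          simpa using integral_comp_mul_left_Ioi (macdonaldKernel β v) 0 hv
  have hpow : v ^ β * v ^ (-β - 1) = v⁻¹ := by
    rw [← Real.rpow_add hv, ← Real.rpow_neg_one]
    ring_nf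
  rw [← hpow, mul_comm (v ^ β), mul_assoc] at hsubst
  have := mul_left_cancel₀ (Real.rpow_pos_of_pos hv _).ne' hsubst
  rw [macdonald, macdonald, this]
  ring

lemma tendsto_macdonaldKernel_nhdsGT_zero (β : ℝ) {v : ℝ} (hv : 0 < v) :
    Tendsto (macdonaldKernel β v) (𝓝[>] 0) (𝓝 0) := by
  obtain ⟨N, hN⟩ := exists_nat_gt (β + 1)
  have hp : 0 < -(β - N) - 1 := by linarith
  have hcont : ContinuousAt (fun s : ℝ => N.factorial / v ^ N * macdonaldKernel (β - N) 0 s) 0 := by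
    simp only [macdonaldKernel_zero]
    exact continuousAt_const.mul ((by fun_prop : ContinuousAt (fun s : ℝ => Real.exp (-s)) 0).mul
      (Real.continuousAt_rpow_const _ _ (Or.inr hp.le)))
  have hlim := hcont.tendsto.mono_left (nhdsWithin_le_nhds (s := Ioi 0))
  rw [macdonaldKernel_zero, Real.zero_rpow hp.ne', mul_zero, mul_zero] at hlim
  refine squeeze_zero' ?_ ?_ hlim
  · filter_upwards [self_mem_nhdsWithin] with s hs using (macdonaldKernel_pos β v hs).le
  · filter_upwards [self_mem_nhdsWithin] with s hs using macdonaldKernel_le_mul_shift β hv N hs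

lemma tendsto_macdonaldKernel_atTop (β : ℝ) {v : ℝ} (hv : 0 ≤ v) :
    Tendsto (macdonaldKernel β v) atTop (𝓝 0) := by
  have hlim : Tendsto (macdonaldKernel β 0) atTop (𝓝 0) := by
    refine (tendsto_rpow_mul_exp_neg_mul_atTop_nhds_zero (-β - 1) 1 one_pos).congr fun s => ?_
    rw [macdonaldKernel_zero, neg_one_mul, mul_comm]
  refine squeeze_zero' ?_ ?_ hlim
  · filter_upwards [eventually_gt_atTop 0] with s hs using (macdonaldKernel_pos β v hs).le
  · filter_upwards [eventually_gt_atTop 0] with s hs using macdonaldKernel_anti β hs hv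

/-- The integrand is the `s`-derivative of the kernel, which vanishes at both ends. -/
lemma macdonald_recurrence (β : ℝ) {v : ℝ} (hv : 0 < v) :
    v * macdonald (β + 2) v - (β + 1) * macdonald (β + 1) v = macdonald β v := by
  have hpow : ∀ s ∈ Ioi (0 : ℝ), HasDerivAt (fun s => s ^ (-β - 1))
      ((-β - 1) * s ^ (-β - 1 - 1)) s := fun s hs =>
    Real.hasDerivAt_rpow_const (Or.inl (ne_of_gt hs))
  have hexp : ∀ s ∈ Ioi (0 : ℝ), HasDerivAt (fun s => Real.exp (-s - v / s))
      (Real.exp (-s - v / s) * (-1 + v / s ^ 2)) s := fun s hs => by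
    have hs₀ : s ≠ 0 := ne_of_gt hs
    refine ((hasDerivAt_neg s).sub
      ((hasDerivAt_const s v).div (hasDerivAt_id s) hs₀)).exp.congr_deriv ?_
    simp only [id, Pi.sub_apply, Pi.div_apply]
    field_simp
    ring
  have hderiv : ∀ s ∈ Ioi (0 : ℝ), v * macdonaldKernel (β + 2) v s
        - (β + 1) * macdonaldKernel (β + 1) v s - macdonaldKernel β v s
      = (-β - 1) * s ^ (-β - 1 - 1) * Real.exp (-s - v / s)
        + s ^ (-β - 1) * (Real.exp (-s - v / s) * (-1 + v / s ^ 2)) := fun s hs => by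
    have hs₀ : s ≠ 0 := ne_of_gt hs
    unfold macdonaldKernel
    rw [show -(β + 2) - 1 = -β - 1 - (2 : ℕ) by push_cast; ring, Real.rpow_sub_natCast hs₀,
      show -(β + 1) - 1 = -β - 1 - 1 by ring, Real.rpow_sub_one hs₀]
    field_simp
    ring
  have int₀ := integrableOn_macdonaldKernel β hv
  have int₁ := (integrableOn_macdonaldKernel (β + 1) hv).const_mul (β + 1)
  have int₂ := (integrableOn_macdonaldKernel (β + 2) hv).const_mul v
  have hzero := integral_Ioi_deriv_mul_eq_sub hpow hexp
    (IntegrableOn.congr_fun ((int₂.sub int₁).sub int₀) hderiv measurableSet_Ioi)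
    (tendsto_macdonaldKernel_nhdsGT_zero β hv) (tendsto_macdonaldKernel_atTop β hv.le)
  have hsplit := integral_sub (int₂.sub int₁) int₀
  simp only [Pi.sub_apply] at hsplit
  rw [← setIntegral_congr_fun measurableSet_Ioi hderiv, hsplit, integral_sub int₂ int₁,
    integral_const_mul, integral_const_mul] at hzero
  unfold macdonald
  linarith

lemma tendsto_macdonald_nhdsGT_zero {β : ℝ} (hβ : β < 0) :
    Tendsto (macdonald β) (𝓝[>] 0) (𝓝 (Real.Gamma (-β) / 2)) := by
  have hlim : Tendsto (fun v => ∫ s in Ioi 0, macdonaldKernel β v s) (𝓝[>] 0)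
      (𝓝 (∫ s in Ioi 0, macdonaldKernel β 0 s)) := by
    refine tendsto_integral_filter_of_dominated_convergence _
      (Eventually.of_forall fun v => aestronglyMeasurable_macdonaldKernel β v) ?_
      (integrableOn_macdonaldKernel_zero hβ) ?_
    · filter_upwards [self_mem_nhdsWithin] with v hv
      filter_upwards [ae_restrict_mem measurableSet_Ioi] with s hs
      rw [Real.norm_of_nonneg (macdonaldKernel_pos β v hs).le]
      exact macdonaldKernel_anti β hs (mem_Ioi.1 hv).le
    · filter_upwards [ae_restrict_mem measurableSet_Ioi] with s hs
      exact (hasDerivAt_macdonaldKernel β 0 hs).continuousAt.tendsto.mono_left nhdsWithin_le_nhds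
  rw [Real.Gamma_eq_integral (neg_pos.2 hβ), div_eq_inv_mul, ← one_div]
  simp only [macdonaldKernel_zero] at hlim
  exact hlim.const_mul _

lemma rpow_mul_macdonaldKernel_mul (p β P W s : ℝ) :
    W ^ p * macdonaldKernel β (P * W) s
      = macdonaldKernel β 0 s * (W ^ p * Real.exp (-(P / s * W))) := by
  rw [macdonaldKernel_zero, macdonaldKernel, sub_eq_add_neg (-s), Real.exp_add,
    show P * W / s = P / s * W by ring]
  ring

lemma integral_rpow_mul_macdonaldKernel_mul {p : ℝ} (hp : -1 < p) (β : ℝ) {P s : ℝ} (hP : 0 < P)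
    (hs : 0 < s) : ∫ W in Ioi 0, W ^ p * macdonaldKernel β (P * W) s
      = (1 / P) ^ (p + 1) * Real.Gamma (p + 1) * macdonaldKernel (β - p - 1) 0 s := by
  have hgamma := Real.integral_rpow_mul_exp_neg_mul_Ioi (a := p + 1) (r := P / s)
    (by linarith) (by positivity)
  rw [add_sub_cancel_right] at hgamma
  have hpow : s ^ (-(β - p - 1) - 1) = s ^ (-β - 1) * s ^ (p + 1) := by
    rw [← Real.rpow_add hs]
    ring_nf
  simp only [rpow_mul_macdonaldKernel_mul]
  rw [integral_const_mul, hgamma, one_div_div, div_eq_mul_one_div s P,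
    Real.mul_rpow hs.le (by positivity), macdonaldKernel_zero, macdonaldKernel_zero, hpow]
  ring

lemma integrable_prod_rpow_mul_macdonaldKernel {p β P : ℝ} (hp : -1 < p) (hβ : β - 1 < p)
    (hP : 0 < P) :
    Integrable (fun z : ℝ × ℝ => z.1 ^ p * macdonaldKernel β (P * z.1) z.2)
      ((volume.restrict (Ioi 0)).prod (volume.restrict (Ioi 0))) := by
  have hmeas : Measurable fun z : ℝ × ℝ => z.1 ^ p * macdonaldKernel β (P * z.1) z.2 := by
    unfold macdonaldKernel
    fun_prop
  refine (integrable_prod_iff' hmeas.aestronglyMeasurable).2 ⟨?_, ?_⟩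
  · filter_upwards [ae_restrict_mem measurableSet_Ioi] with s hs
    have hexp : IntegrableOn (fun W : ℝ => W ^ p * Real.exp (-(P / s * W))) (Ioi 0) := by
      simpa using integrableOn_rpow_mul_exp_neg_mul_rpow hp one_pos
        (div_pos hP (mem_Ioi.1 hs))
    simp only [rpow_mul_macdonaldKernel_mul]
    exact hexp.const_mul _
  · have hβp : β - p - 1 < 0 := by linarith
    refine IntegrableOn.congr_fun ((integrableOn_macdonaldKernel_zero hβp).const_mul
      ((1 / P) ^ (p + 1) * Real.Gamma (p + 1))) (fun s hs => ?_) measurableSet_Ioi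
    rw [← integral_rpow_mul_macdonaldKernel_mul hp β hP hs]
    refine setIntegral_congr_fun measurableSet_Ioi fun W hW => ?_
    exact (Real.norm_of_nonneg (mul_nonneg (Real.rpow_nonneg (mem_Ioi.1 hW).le p)
      (macdonaldKernel_pos β _ hs).le)).symm

lemma integrableOn_rpow_mul_macdonald {p β P : ℝ} (hp : -1 < p) (hβ : β - 1 < p) (hP : 0 < P) :
    IntegrableOn (fun W => W ^ p * macdonald β (P * W)) (Ioi 0) := by
  refine ((integrable_prod_rpow_mul_macdonaldKernel hp hβ hP).integral_prod_left.const_mul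
    (1 / 2)).congr (Eventually.of_forall fun W => ?_)
  simp only [macdonald]
  rw [integral_const_mul]
  ring

end Macdonald

/-! ### The Wronskians of the Bessel–Clifford and Macdonald functions -/

section Wronskian

open scoped Topology

lemma besselClifford_wronskian (β v : ℝ) :
    besselClifford β v * besselClifford (-β - 1) v
        - v * (besselClifford (β + 1) v * besselClifford (-β) v)
      = -Real.sin (π * β) / π := by
  set w : ℝ → ℝ := fun v => besselClifford β v * besselClifford (-β - 1) v
    - v * (besselClifford (β + 1) v * besselClifford (-β) v)
  have hderiv (v : ℝ) : HasDerivAt w 0 v := by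
    have hd (a : ℝ) := hasDerivAt_besselClifford a v
    have r₁ := besselClifford_recurrence β v
    have r₂ := besselClifford_recurrence (-β - 1) v
    rw [show -β - 1 + 2 = -β + 1 by ring, sub_add_cancel] at r₂
    refine (((hd β).mul (hd (-β - 1))).sub
      ((hasDerivAt_id v).mul ((hd (β + 1)).mul (hd (-β))))).congr_deriv ?_
    rw [show β + 1 + 1 = β + 2 by ring, sub_add_cancel]
    simp only [id, Pi.mul_apply]
    linear_combination -besselClifford (-β) v * r₁ - besselClifford (β + 1) v * r₂
  have hconst := is_const_of_deriv_eq_zero (fun u => (hderiv u).differentiableAt)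
    (fun u => (hderiv u).deriv) v 0
  calc w v = w 0 := hconst
    _ = 1 / (Real.Gamma (-β) * Real.Gamma (1 - -β)) := by
      simp only [w, besselClifford_zero, zero_mul, sub_zero, sub_add_cancel, sub_neg_eq_add,
        one_div_mul_one_div]
      rw [mul_comm, add_comm]
    _ = -Real.sin (π * β) / π := by
      rw [Real.Gamma_mul_Gamma_one_sub, one_div_div, mul_neg, Real.sin_neg]

lemma rpow_one_add_mul_macdonald (β : ℝ) {v : ℝ} (hv : 0 < v) :
    v ^ (1 + β) * macdonald β v
      = macdonald (-β - 2) v - (β + 1) * macdonald (-β - 1) v := by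
  have h := macdonald_recurrence (-β - 2) hv
  rw [show -β - 2 + 2 = -β by ring, show -β - 2 + 1 = -β - 1 by ring, macdonald_neg β hv] at h
  rw [Real.rpow_add hv, Real.rpow_one, ← h]
  ring

/-- The Wronskian of `𝒞_β` and `𝒦_β`, up to its weight `v ^ (-β - 1)`. -/
noncomputable def macdonaldWronskian (β v : ℝ) : ℝ :=
  v ^ (1 + β) * (macdonald β v * besselClifford (β + 1) v
    + macdonald (β + 1) v * besselClifford β v)

lemma hasDerivAt_macdonaldWronskian (β : ℝ) {v : ℝ} (hv : 0 < v) :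
    HasDerivAt (macdonaldWronskian β) 0 v := by
  have hK (b : ℝ) := hasDerivAt_macdonald b hv
  have hC (b : ℝ) := hasDerivAt_besselClifford b v
  have rK := macdonald_recurrence β hv
  have rC := besselClifford_recurrence β v
  refine ((Real.hasDerivAt_rpow_const (p := 1 + β) (Or.inl hv.ne')).mul
    (((hK β).mul (hC (β + 1))).add ((hK (β + 1)).mul (hC β)))).congr_deriv ?_
  rw [show 1 + β = β + 1 by ring, add_sub_cancel_right, Real.rpow_add_one hv.ne',
    show β + 1 + 1 = β + 2 by ring]
  simp only [Pi.mul_apply, Pi.add_apply]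
  linear_combination v ^ β * (macdonald β v * rC - besselClifford β v * rK)

lemma tendsto_macdonaldWronskian_nhdsGT_zero {β : ℝ} (hβ : -1 < β) :
    Tendsto (macdonaldWronskian β) (𝓝[>] 0) (𝓝 (1 / 2)) := by
  have hΓ : Real.Gamma (β + 1) ≠ 0 := (Real.Gamma_pos_of_pos (by linarith)).ne'
  have hC (a : ℝ) : Tendsto (besselClifford a) (𝓝[>] 0) (𝓝 (1 / Real.Gamma (a + 1))) := by
    rw [← besselClifford_zero]
    exact (continuous_besselClifford a).continuousAt.tendsto.mono_left nhdsWithin_le_nhds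
  have hK₁ := tendsto_macdonald_nhdsGT_zero (show -β - 1 < 0 by linarith)
  have hK₂ := tendsto_macdonald_nhdsGT_zero (show -β - 2 < 0 by linarith)
  have hlim := ((hK₂.sub (hK₁.const_mul (β + 1))).mul (hC (β + 1))).add (hK₁.mul (hC β))
  have hval : (Real.Gamma (-(-β - 2)) / 2 - (β + 1) * (Real.Gamma (-(-β - 1)) / 2))
        * (1 / Real.Gamma (β + 1 + 1)) + Real.Gamma (-(-β - 1)) / 2 * (1 / Real.Gamma (β + 1))
      = 1 / 2 := by
    rw [show -(-β - 2) = β + 1 + 1 by ring, show -(-β - 1) = β + 1 by ring,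
      Real.Gamma_add_one (show β + 1 ≠ 0 by linarith)]
    field_simp
    ring
  rw [hval] at hlim
  refine hlim.congr' ?_
  filter_upwards [self_mem_nhdsWithin] with v hv
  have hneg := macdonald_neg (1 + β) hv
  rw [show -(1 + β) = -β - 1 by ring, add_comm 1 β] at hneg
  rw [← rpow_one_add_mul_macdonald β hv, hneg, macdonaldWronskian, add_comm 1 β]
  ring

lemma macdonaldWronskian_add_one (β : ℝ) {v : ℝ} (hv : 0 < v) :
    macdonaldWronskian (β + 1) v = macdonaldWronskian β v := by
  unfold macdonaldWronskian
  rw [← add_assoc, Real.rpow_add_one hv.ne', show β + 1 + 1 = β + 2 by ring]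
  linear_combination v ^ (1 + β) * (macdonald (β + 1) v * besselClifford_recurrence β v
    + besselClifford (β + 1) v * macdonald_recurrence β hv)

lemma macdonaldWronskian_of_neg_one_lt {β : ℝ} (hβ : -1 < β) {v : ℝ} (hv : 0 < v) :
    macdonaldWronskian β v = 1 / 2 := by
  refine tendsto_nhds_unique (tendsto_const_nhds.congr' ?_)
    (tendsto_macdonaldWronskian_nhdsGT_zero hβ)
  filter_upwards [self_mem_nhdsWithin] with u hu
  exact isOpen_Ioi.is_const_of_deriv_eq_zero isPreconnected_Ioi
    (fun z hz => (hasDerivAt_macdonaldWronskian β hz).differentiableAt.differentiableWithinAt)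
    (fun z hz => (hasDerivAt_macdonaldWronskian β hz).deriv) hv hu

lemma macdonaldWronskian_eq (β : ℝ) {v : ℝ} (hv : 0 < v) : macdonaldWronskian β v = 1 / 2 := by
  have hshift (n : ℕ) : macdonaldWronskian (β + n) v = macdonaldWronskian β v := by
    induction n with
    | zero => simp
    | succ n ih => rw [← ih, Nat.cast_succ, ← add_assoc, macdonaldWronskian_add_one _ hv]
  obtain ⟨n, hn⟩ := exists_nat_gt (-1 - β)
  rw [← hshift n, macdonaldWronskian_of_neg_one_lt (by linarith) hv]

/-- Eliminate `𝒦_{β+1}` between the Wronskians of orders `β` and `-1 - β`. -/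
lemma macdonald_mul_sin (β : ℝ) {v : ℝ} (hv : 0 < v) :
    macdonald β v * Real.sin (π * β)
      = π / 2 * (v ^ (-β) * besselClifford (-β) v - besselClifford β v) := by
  have w₁ := macdonaldWronskian_eq β hv
  have w₂ := macdonaldWronskian_eq (-1 - β) hv
  have w₃ := besselClifford_wronskian β v
  unfold macdonaldWronskian at w₁ w₂
  have hK := macdonald_neg (1 + β) hv
  rw [show -(1 + β) = -1 - β by ring] at hK
  rw [show 1 + (-1 - β) = -β by ring, show -1 - β + 1 = -β by ring, macdonald_neg β hv, hK,
    add_comm 1 β, show -1 - β = -β - 1 by ring, Real.rpow_neg hv.le] at w₂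
  rw [add_comm 1 β] at w₁
  rw [Real.rpow_add_one hv.ne'] at w₁ w₂
  rw [eq_div_iff Real.pi_ne_zero] at w₃
  rw [Real.rpow_neg hv.le]
  generalize Real.sin (π * β) = S at w₃ ⊢
  field_simp at w₁ w₂ ⊢
  linear_combination 2 * macdonald β v * v ^ β * w₃
    + π * besselClifford (-β) v * w₁ - π * v ^ β * besselClifford β v * w₂

lemma continuous_macdonald_order {v : ℝ} (hv : 0 < v) : Continuous fun β => macdonald β v := by
  refine continuous_const.mul (continuous_iff_continuousAt.2 fun α => ?_)
  refine continuousAt_of_dominated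
    (bound := fun s => macdonaldKernel (α + 1) v s + macdonaldKernel (α - 1) v s)
    (Eventually.of_forall fun β => aestronglyMeasurable_macdonaldKernel β v) ?_
    ((integrableOn_macdonaldKernel _ hv).add (integrableOn_macdonaldKernel _ hv)) ?_
  · filter_upwards [Ioo_mem_nhds (sub_one_lt α) (lt_add_one α)] with β hβ
    filter_upwards [ae_restrict_mem measurableSet_Ioi] with s hs
    rw [Real.norm_of_nonneg (macdonaldKernel_pos _ _ hs).le]
    have pos₁ := (macdonaldKernel_pos (α + 1) v hs).le
    have pos₂ := (macdonaldKernel_pos (α - 1) v hs).le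
    unfold macdonaldKernel at *
    rcases le_total s 1 with h | h
    · refine le_add_of_le_of_nonneg ?_ pos₂
      gcongr ?_ * _
      exact Real.rpow_le_rpow_of_exponent_ge hs h (by linarith [hβ.2])
    · refine le_add_of_nonneg_of_le pos₁ ?_
      gcongr ?_ * _
      exact Real.rpow_le_rpow_of_exponent_le h (by linarith [hβ.1])
  · filter_upwards [ae_restrict_mem measurableSet_Ioi] with s hs
    exact ((Real.continuousAt_const_rpow (ne_of_gt hs)).comp (by fun_prop)).mul continuousAt_const

lemma eventually_sin_mul_pi_ne_zero (α : ℝ) : ∀ᶠ β in 𝓝[≠] α, Real.sin (β * π) ≠ 0 := by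
  have hderiv : HasDerivAt (fun β => Real.sin (β * π)) (Real.cos (α * π) * (1 * π)) α :=
    ((hasDerivAt_id α).mul_const π).sin
  by_cases hsin : Real.sin (α * π) = 0
  · refine hderiv.eventually_ne (mul_ne_zero (fun hcos => ?_) (by positivity))
    simpa [hsin, hcos] using Real.sin_sq_add_cos_sq (α * π)
  · exact (hderiv.continuousAt.eventually_ne hsin).filter_mono nhdsWithin_le_nhds

lemma half_rpow_mul_sq_div_four_rpow_neg (α : ℝ) {x : ℝ} (hx : 0 < x) :
    (x / 2) ^ α * (x ^ 2 / 4) ^ (-α) = (x / 2) ^ (-α) := by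
  have hx₂ : 0 < x / 2 := by positivity
  rw [show x ^ 2 / 4 = (x / 2) ^ (2 : ℝ) by rw [Real.rpow_two]; ring, ← Real.rpow_mul hx₂.le,
    ← Real.rpow_add hx₂]
  ring_nf

lemma besselK_eq_rpow_mul_macdonald (α : ℝ) {x : ℝ} (hx : 0 < x) :
    besselK α x = (x / 2) ^ α * macdonald α (x ^ 2 / 4) := by
  have hx₂ : x / 2 ≠ 0 := by positivity
  have hv : 0 < x ^ 2 / 4 := by positivity
  have hcont : Continuous fun β => (x / 2) ^ β * macdonald β (x ^ 2 / 4) :=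
    (Real.continuous_const_rpow hx₂).mul (continuous_macdonald_order hv)
  refine Tendsto.limUnder_eq ((hcont.tendsto α).mono_left nhdsWithin_le_nhds |>.congr' ?_)
  filter_upwards [eventually_sin_mul_pi_ne_zero α] with β hβ
  have hsin := macdonald_mul_sin β hv
  rw [eq_div_iff hβ, besselI_eq_rpow_mul_besselClifford _ hx,
    besselI_eq_rpow_mul_besselClifford _ hx, mul_assoc, mul_comm β π, hsin,
    ← half_rpow_mul_sq_div_four_rpow_neg β hx]
  ring

lemma besselKt_eq_macdonald (α : ℝ) {x : ℝ} (hx : 0 < x) :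
    besselKt α x = macdonald α (x ^ 2 / 4) := by
  rw [besselKt, besselK_eq_rpow_mul_macdonald α hx, ← mul_assoc, ← Real.rpow_add (by positivity),
    neg_add_cancel, Real.rpow_zero, one_mul]

end Wronskian

/-! ### Gegenbauer polynomials and a product identity -/

section Gegenbauer

lemma sum_range_succ_choose_mul_besselClifford (l : ℕ) (α Z : ℝ) :
    ∑ i ∈ Finset.range (l + 2), ((l + 1).choose i : ℝ)
        * (1 / Real.Gamma (i + α + 1) * (Z ^ i * besselClifford (α + (l + 1 : ℕ) + i) Z))
      = ∑ i ∈ Finset.range (l + 1), (l.choose i : ℝ) * (1 / Real.Gamma (i + (α + 1) + 1)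
        * ((i + α + 1) * (Z ^ i * besselClifford (α + 1 + l + i) Z)
          + Z * (Z ^ i * besselClifford (α + 1 + l + i + 1) Z))) := by
  rw [Finset.sum_choose_succ_mul fun i _ =>
    1 / Real.Gamma (i + α + 1) * (Z ^ i * besselClifford (α + (l + 1 : ℕ) + i) Z),
    ← Finset.sum_add_distrib]
  refine Finset.sum_congr rfl fun i _ => ?_
  rw [one_div_Gamma_eq_mul_one_div_Gamma_add_one (i + α + 1)]
  push_cast
  rw [show (i : ℝ) + 1 + α + 1 = i + (α + 1) + 1 by ring, ← add_assoc (i : ℝ) α 1,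
    show α + (l + 1) + ((i : ℝ) + 1) = α + 1 + l + i + 1 by ring,
    show α + (l + 1) + (i : ℝ) = α + 1 + l + i by ring]
  ring

/-- By Pascal's rule, the sum for `(l + 1, α)` is `α + 1 + Z d/dZ` applied to the sum for
`(l, α + 1)`, and so is the right-hand side. -/
lemma sum_choose_mul_besselClifford (l : ℕ) (α Z : ℝ) :
    ∑ i ∈ Finset.range (l + 1), (l.choose i : ℝ)
        * (1 / Real.Gamma (i + α + 1) * (Z ^ i * besselClifford (α + l + i) Z))
      = besselClifford α Z * (1 / Real.Gamma (α + l + 1)) := by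
  induction l generalizing α Z with
  | zero => simp [mul_comm]
  | succ l ih =>
    have hsum : HasDerivAt (fun Z => ∑ i ∈ Finset.range (l + 1), (l.choose i : ℝ)
          * (1 / Real.Gamma (i + (α + 1) + 1) * (Z ^ i * besselClifford (α + 1 + l + i) Z)))
        (∑ i ∈ Finset.range (l + 1), (l.choose i : ℝ) * (1 / Real.Gamma (i + (α + 1) + 1)
          * (i * Z ^ (i - 1) * besselClifford (α + 1 + l + i) Z
            + Z ^ i * besselClifford (α + 1 + l + i + 1) Z))) Z :=
      HasDerivAt.fun_sum fun i _ =>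
        (((hasDerivAt_pow i Z).mul (hasDerivAt_besselClifford _ Z)).const_mul _).const_mul _
    have hprod := (hasDerivAt_besselClifford (α + 1) Z).mul_const
      (1 / Real.Gamma (α + 1 + l + 1))
    simp only [ih (α + 1)] at hsum
    have heuler : ∑ i ∈ Finset.range (l + 1), (l.choose i : ℝ) * (1 / Real.Gamma (i + (α + 1) + 1)
        * ((i + α + 1) * (Z ^ i * besselClifford (α + 1 + l + i) Z)
          + Z * (Z ^ i * besselClifford (α + 1 + l + i + 1) Z)))
        = (α + 1) * (besselClifford (α + 1) Z * (1 / Real.Gamma (α + 1 + l + 1)))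
          + Z * (besselClifford (α + 1 + 1) Z * (1 / Real.Gamma (α + 1 + l + 1))) := by
      rw [← ih (α + 1), hprod.unique hsum, Finset.mul_sum, Finset.mul_sum,
        ← Finset.sum_add_distrib]
      refine Finset.sum_congr rfl fun i _ => ?_
      have hpow : Z * ((i : ℝ) * Z ^ (i - 1)) = i * Z ^ i := by
        rcases i with _ | i
        · simp
        · rw [Nat.add_sub_cancel, pow_succ]
          ring
      linear_combination -(l.choose i : ℝ) * (1 / Real.Gamma (i + (α + 1) + 1))
        * besselClifford (α + 1 + l + i) Z * hpow
    rw [sum_range_succ_choose_mul_besselClifford, heuler, ← besselClifford_recurrence α Z,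
      show α + 1 + 1 = α + 2 by ring, Nat.cast_succ, ← add_assoc α, add_right_comm α 1 (l : ℝ)]
    ring

/-- The divided power `x ^ (n - 2k) / (n - 2k)!`, understood as zero when `n < 2k`; Gegenbauer
polynomials are combinations of these, and differentiation only shifts the indices. -/
noncomputable def dividedMonomial (n k : ℕ) (x : ℝ) : ℝ :=
  if 2 * k ≤ n then x ^ (n - 2 * k) / (n - 2 * k).factorial else 0

lemma dividedMonomial_of_lt {n k : ℕ} (h : n < 2 * k) (x : ℝ) : dividedMonomial n k x = 0 :=
  if_neg h.not_ge

lemma dividedMonomial_add_two_succ (n k : ℕ) (x : ℝ) :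
    dividedMonomial (n + 2) (k + 1) x = dividedMonomial n k x := by
  simp only [dividedMonomial, Nat.mul_succ, Nat.add_sub_add_right, Nat.add_le_add_iff_right]

lemma dividedMonomial_mul (n k : ℕ) (r x : ℝ) :
    dividedMonomial n k (r * x) * r ^ (2 * k) = r ^ n * dividedMonomial n k x := by
  unfold dividedMonomial
  split_ifs with h
  · rw [← Nat.sub_add_cancel h, pow_add, Nat.add_sub_cancel, mul_pow]
    ring
  · simp

lemma dividedMonomial_zero_right (n k : ℕ) :
    dividedMonomial n k 0 = if 2 * k = n then 1 else 0 := by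
  unfold dividedMonomial
  rcases lt_trichotomy (2 * k) n with h | rfl | h
  · rw [if_pos h.le, if_neg h.ne, zero_pow (by omega), zero_div]
  · simp
  · rw [if_neg h.not_ge, if_neg h.ne']

lemma mul_dividedMonomial (n k : ℕ) (x : ℝ) :
    x * dividedMonomial n k x = ((n : ℝ) + 1 - 2 * k) * dividedMonomial (n + 1) k x := by
  unfold dividedMonomial
  rcases le_or_gt (2 * k) n with h | h
  · obtain ⟨m, rfl⟩ := Nat.exists_eq_add_of_le h
    rw [if_pos h, if_pos (by omega), Nat.add_sub_cancel_left, add_assoc, Nat.add_sub_cancel_left,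
      Nat.factorial_succ]
    push_cast
    field_simp
    ring
  · rw [if_neg h.not_ge, mul_zero]
    rcases eq_or_ne (n + 1) (2 * k) with hk | hk
    · have : (n : ℝ) + 1 = 2 * k := by exact_mod_cast hk
      rw [this, sub_self, zero_mul]
    · rw [if_neg (by omega), mul_zero]

lemma hasDerivAt_dividedMonomial_succ (n k : ℕ) (x : ℝ) :
    HasDerivAt (dividedMonomial (n + 1) k) (dividedMonomial n k x) x := by
  unfold dividedMonomial
  rcases le_or_gt (2 * k) n with h | h
  · obtain ⟨m, rfl⟩ := Nat.exists_eq_add_of_le h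
    simp only [if_pos h, add_assoc, if_pos (show 2 * k ≤ 2 * k + (m + 1) by omega),
      Nat.add_sub_cancel_left]
    refine ((hasDerivAt_pow (m + 1) x).div_const _).congr_deriv ?_
    rw [Nat.factorial_succ]
    push_cast
    field_simp
  · rw [if_neg h.not_ge]
    rcases eq_or_ne (n + 1) (2 * k) with hk | hk
    · simpa [hk] using hasDerivAt_const x (1 : ℝ)
    · simpa only [if_neg (show ¬2 * k ≤ n + 1 by omega)] using hasDerivAt_const x (0 : ℝ)

lemma gegenbauerCt_eq_sum_dividedMonomial {n M : ℕ} (hM : n < 2 * M) (l x : ℝ) :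
    gegenbauerCt n l x = ∑ k ∈ Finset.range M,
      (-1) ^ k * Real.Gamma (l + n - k) / k.factorial * dividedMonomial n k (2 * x) := by
  have hsub : Finset.range (n / 2 + 1) ⊆ Finset.range M := Finset.range_subset_range.2 (by omega)
  rw [gegenbauerCt, ← Finset.sum_subset hsub]
  · refine Finset.sum_congr rfl fun k hk => ?_
    rw [dividedMonomial, if_pos (by rw [Finset.mem_range] at hk; omega)]
    field_simp
  · intro k _ hk
    rw [Finset.mem_range, not_lt] at hk
    rw [dividedMonomial_of_lt (by omega), mul_zero]

lemma hasDerivAt_gegenbauerCt_succ (n : ℕ) (l x : ℝ) :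
    HasDerivAt (gegenbauerCt (n + 1) l) (2 * gegenbauerCt n (l + 1) x) x := by
  rw [funext fun x => gegenbauerCt_eq_sum_dividedMonomial (show n + 1 < 2 * (n + 2) by omega) l x,
    gegenbauerCt_eq_sum_dividedMonomial (show n < 2 * (n + 2) by omega) (l + 1) x, Finset.mul_sum]
  refine HasDerivAt.fun_sum fun k _ => ?_
  refine (((hasDerivAt_dividedMonomial_succ n k (2 * x)).comp x
    ((hasDerivAt_id x).const_mul 2)).const_mul _).congr_deriv ?_
  rw [show l + ((n + 1 : ℕ) : ℝ) - k = l + 1 + n - k by push_cast; ring]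
  ring

lemma four_rpow_mul_Gamma_mul_Gamma (x : ℝ) :
    4 ^ x * (Real.Gamma (x + 1 / 2) * Real.Gamma (x + 1)) = √π * Real.Gamma (2 * x + 1) := by
  have h := Real.Gamma_mul_Gamma_add_half (x + 1 / 2)
  rw [add_assoc x, add_halves, show 2 * (x + 1 / 2) = 2 * x + 1 by ring,
    show 1 - (2 * x + 1) = 2 * -x by ring, Real.rpow_mul (by norm_num), Real.rpow_neg (by norm_num),
    show (2 : ℝ) ^ (2 : ℝ) = 4 by norm_num] at h
  rw [h]
  field_simp

/-- The expansion of a Gegenbauer polynomial that is adapted to products of Bessel functions, see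
`gegenbauerSum_eq`. -/
noncomputable def gegenbauerSum (j : ℕ) (α c : ℝ) : ℝ :=
  ∑ i ∈ Finset.range (j + 1),
    besselCliffordCoeff α i * ((-((1 - c ^ 2) / 4)) ^ i * dividedMonomial j i c)

lemma hasDerivAt_gegenbauerSum_succ (j : ℕ) (α c : ℝ) :
    HasDerivAt (gegenbauerSum (j + 1) α) ((j + 2 * α + 2) / 2 * gegenbauerSum j (α + 1) c) c := by
  have hu : HasDerivAt (fun c : ℝ => -((1 - c ^ 2) / 4)) (c / 2) c :=
    (((hasDerivAt_pow 2 c).const_sub 1).div_const 4).neg.congr_deriv (by simp; ring)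
  have hsum : HasDerivAt (gegenbauerSum (j + 1) α) (∑ i ∈ Finset.range (j + 2),
      besselCliffordCoeff α i
        * (i * (-((1 - c ^ 2) / 4)) ^ (i - 1) * (c / 2) * dividedMonomial (j + 1) i c
          + (-((1 - c ^ 2) / 4)) ^ i * dividedMonomial j i c)) c :=
    HasDerivAt.fun_sum fun i _ =>
      ((hu.pow i).mul (hasDerivAt_dividedMonomial_succ j i c)).const_mul _
  refine hsum.congr_deriv ?_
  simp only [mul_add, Finset.sum_add_distrib]
  rw [Finset.sum_range_succ', Finset.sum_range_succ _ (j + 1),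
    dividedMonomial_of_lt (show j < 2 * (j + 1) by omega), gegenbauerSum, Finset.mul_sum]
  simp only [Nat.cast_zero, zero_mul, mul_zero, add_zero]
  rw [← Finset.sum_add_distrib]
  refine Finset.sum_congr rfl fun i _ => ?_
  have hmul := mul_dividedMonomial (j + 1) (i + 1) c
  rw [dividedMonomial_add_two_succ] at hmul
  rw [← add_mul_besselCliffordCoeff_add_one α i, ← succ_mul_besselCliffordCoeff_succ α i,
    Nat.add_sub_cancel]
  push_cast at hmul ⊢
  linear_combination
    besselCliffordCoeff α (i + 1) * (i + 1) * (-((1 - c ^ 2) / 4)) ^ i / 2 * hmul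

lemma gegenbauerSum_zero_right (j : ℕ) {α : ℝ} (hα : -1 / 2 < α) :
    gegenbauerSum j α 0
      = 4 ^ α / (√π * Real.Gamma (j + 2 * α + 1)) * gegenbauerCt j (α + 1 / 2) 0 := by
  rw [gegenbauerCt_eq_sum_dividedMonomial (show j < 2 * (j + 1) by omega), gegenbauerSum, mul_zero,
    Finset.mul_sum]
  refine Finset.sum_congr rfl fun i _ => ?_
  rw [dividedMonomial_zero_right]
  split_ifs with h
  · subst h
    have hΓ₁ : 0 < Real.Gamma (i + α + 1) := Real.Gamma_pos_of_pos (by linarith)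
    have hΓ₂ : 0 < Real.Gamma (2 * (i + α) + 1) := Real.Gamma_pos_of_pos (by linarith)
    have hdup := four_rpow_mul_Gamma_mul_Gamma (i + α)
    rw [Real.rpow_add (by norm_num), Real.rpow_natCast] at hdup
    rw [besselCliffordCoeff,
      show ((2 * i : ℕ) : ℝ) + 2 * α + 1 = 2 * (i + α) + 1 by push_cast; ring,
      show α + 1 / 2 + ((2 * i : ℕ) : ℝ) - i = i + α + 1 / 2 by push_cast; ring,
      show -((1 - (0 : ℝ) ^ 2) / 4) = -1 / 4 by norm_num, div_pow]
    generalize Real.Gamma (i + α + 1) = A at *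
    generalize Real.Gamma (i + α + 1 / 2) = B at *
    generalize Real.Gamma (2 * (i + α) + 1) = C at *
    field_simp
    linear_combination -hdup
  · simp

/-- Both sides satisfy the same recursion under differentiation and agree at `0`. -/
lemma gegenbauerSum_eq (j : ℕ) {α : ℝ} (hα : -1 / 2 < α) (c : ℝ) :
    gegenbauerSum j α c
      = 4 ^ α / (√π * Real.Gamma (j + 2 * α + 1)) * gegenbauerCt j (α + 1 / 2) c := by
  induction j generalizing α c with
  | zero =>
    have h := gegenbauerSum_zero_right 0 hα
    simpa [gegenbauerSum, gegenbauerCt, dividedMonomial] using h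
  | succ j ih =>
    set K : ℝ := 4 ^ α / (√π * Real.Gamma ((j + 1 : ℕ) + 2 * α + 1)) with hK
    have hpos : 0 < (j : ℝ) + 2 * α + 2 := by linarith [j.cast_nonneg (α := ℝ)]
    have hΓ : Real.Gamma (j + 2 * (α + 1) + 1)
        = (j + 2 * α + 2) * Real.Gamma ((j + 1 : ℕ) + 2 * α + 1) := by
      rw [show (j : ℝ) + 2 * (α + 1) + 1 = (j + 2 * α + 2) + 1 by ring, Real.Gamma_add_one hpos.ne']
      push_cast
      ring_nf
    have hΓ₀ : 0 < Real.Gamma ((j + 1 : ℕ) + 2 * α + 1) :=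
      Real.Gamma_pos_of_pos (by push_cast; linarith)
    have hderiv (x : ℝ) : HasDerivAt
        (fun c => gegenbauerSum (j + 1) α c - K * gegenbauerCt (j + 1) (α + 1 / 2) c) 0 x := by
      refine ((hasDerivAt_gegenbauerSum_succ j α x).sub
        ((hasDerivAt_gegenbauerCt_succ j (α + 1 / 2) x).const_mul K)).congr_deriv ?_
      rw [ih (by linarith), hK, hΓ, Real.rpow_add_one (by norm_num), add_right_comm α 1]
      field_simp
      ring
    have hconst := is_const_of_deriv_eq_zero (fun x => (hderiv x).differentiableAt)
      (fun x => (hderiv x).deriv) c 0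
    rwa [gegenbauerSum_zero_right (j + 1) hα, sub_self, sub_eq_zero] at hconst

end Gegenbauer

/-! ### Laplace transforms of Bessel–Clifford functions -/

section Laplace

lemma integrableOn_rpow_mul_exp_neg_div {p t : ℝ} (hp : -1 < p) (ht : 0 < t) :
    IntegrableOn (fun W : ℝ => W ^ p * Real.exp (-(W / t))) (Ioi 0) := by
  simpa [div_eq_inv_mul] using integrableOn_rpow_mul_exp_neg_mul_rpow hp one_pos (inv_pos.2 ht)

lemma integral_rpow_mul_exp_neg_div {p t : ℝ} (hp : -1 < p) (ht : 0 < t) :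
    ∫ W in Ioi 0, W ^ p * Real.exp (-(W / t)) = t ^ (p + 1) * Real.Gamma (p + 1) := by
  have h := Real.integral_rpow_mul_exp_neg_mul_Ioi (a := p + 1) (by linarith) (inv_pos.2 ht)
  simpa [div_eq_inv_mul] using h

lemma integrableOn_rpow_mul_exp_neg_div_mul {p t B : ℝ} {h : ℝ → ℝ} (hp : -1 < p) (ht : 0 < t)
    (hh : Continuous h) (hB : ∀ W > 0, |h W| ≤ B) :
    IntegrableOn (fun W : ℝ => W ^ p * Real.exp (-(W / t)) * h W) (Ioi 0) :=
  (integrableOn_rpow_mul_exp_neg_div hp ht).mul_bdd hh.aestronglyMeasurable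
    ((ae_restrict_iff' measurableSet_Ioi).2 (Eventually.of_forall hB))

lemma hasSum_integral_rpow_mul_exp_neg_div_mul {a : ℕ → ℝ} {d : ℕ} {p t B : ℝ} {F h : ℝ → ℝ}
    (hp : -1 < p) (ht : 0 < t) (hF : ∀ W > 0, HasSum (fun m => a m * (W ^ d) ^ m) (F W))
    (hh : Continuous h) (hB : ∀ W > 0, |h W| ≤ B)
    (hs : Summable fun m : ℕ => |a m| * (t ^ (p + d * m + 1) * Real.Gamma (p + d * m + 1))) :
    HasSum (fun m : ℕ => a m * ∫ W in Ioi 0, W ^ (p + d * m) * Real.exp (-(W / t)) * h W)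
      (∫ W in Ioi 0, W ^ p * Real.exp (-(W / t)) * F W * h W) := by
  have hpm (m : ℕ) : -1 < p + d * m := by
    have : (0 : ℝ) ≤ d * m := by positivity
    linarith
  have hint (m : ℕ) := integrableOn_rpow_mul_exp_neg_div_mul (hpm m) ht hh hB
  have hnorm (m : ℕ) : ∫ W in Ioi 0, ‖a m * (W ^ (p + d * m) * Real.exp (-(W / t)) * h W)‖
      ≤ B * (|a m| * (t ^ (p + d * m + 1) * Real.Gamma (p + d * m + 1))) := by
    rw [← integral_rpow_mul_exp_neg_div (hpm m) ht, ← integral_const_mul, ← integral_const_mul]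
    refine setIntegral_mono_on ((hint m).const_mul _).norm
      (((integrableOn_rpow_mul_exp_neg_div (hpm m) ht).const_mul _).const_mul _)
      measurableSet_Ioi fun W hW => ?_
    have hker : 0 < W ^ (p + d * m) * Real.exp (-(W / t)) :=
      mul_pos (Real.rpow_pos_of_pos hW _) (Real.exp_pos _)
    rw [norm_mul, norm_mul, Real.norm_of_nonneg hker.le, Real.norm_eq_abs, Real.norm_eq_abs]
    linarith [mul_le_mul_of_nonneg_left (hB W hW) (mul_nonneg (abs_nonneg (a m)) hker.le)]
  have hsum_int := hasSum_integral_of_summable_integral_norm (fun m => (hint m).const_mul (a m))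
    (Summable.of_nonneg_of_le (fun m => integral_nonneg fun _ => norm_nonneg _) hnorm
      (hs.mul_left B))
  have hsum : ∀ W ∈ Ioi (0 : ℝ),
      ∑' m : ℕ, a m * (W ^ (p + d * m) * Real.exp (-(W / t)) * h W)
        = W ^ p * Real.exp (-(W / t)) * F W * h W := by
    intro W hW
    rw [← (((hF W hW).mul_left (W ^ p * Real.exp (-(W / t)))).mul_right (h W)).tsum_eq]
    refine tsum_congr fun m => ?_
    rw [← pow_mul, ← Real.rpow_natCast W, Nat.cast_mul, Real.rpow_add hW]
    ring
  simpa only [integral_const_mul, setIntegral_congr_fun measurableSet_Ioi hsum] using hsum_int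

lemma rpow_add_natCast_mul_add_one {t : ℝ} (ht : 0 < t) (p : ℝ) (d m : ℕ) :
    t ^ (p + d * m + 1) = t ^ (p + 1) * (t ^ d) ^ m := by
  rw [← pow_mul, ← Real.rpow_natCast, ← Real.rpow_add ht]
  push_cast
  ring_nf

lemma besselCliffordCoeff_mul_Gamma {γ : ℝ} (hγ : -1 < γ) (m : ℕ) :
    besselCliffordCoeff γ m * Real.Gamma (γ + m + 1) = 1 / m.factorial := by
  have hΓ : 0 < Real.Gamma (γ + m + 1) := Real.Gamma_pos_of_pos (by linarith)
  rw [besselCliffordCoeff, add_comm (m : ℝ) γ]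
  field_simp

lemma summable_besselCliffordCoeff_mul_Gamma {γ t : ℝ} (hγ : -1 < γ) (ht : 0 < t) (κ : ℝ) :
    Summable fun m : ℕ => |besselCliffordCoeff γ m * κ ^ m|
      * (t ^ (γ + (1 : ℕ) * m + 1) * Real.Gamma (γ + (1 : ℕ) * m + 1)) := by
  refine ((Real.summable_pow_div_factorial (|κ| * t)).mul_left (t ^ (γ + 1))).congr fun m => ?_
  rw [rpow_add_natCast_mul_add_one ht, abs_mul, abs_of_pos (besselCliffordCoeff_pos hγ m), abs_pow,
    Nat.cast_one, one_mul, pow_one, mul_pow]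
  linear_combination -(t ^ (γ + 1) * |κ| ^ m * t ^ m) * besselCliffordCoeff_mul_Gamma hγ m

lemma hasSum_besselClifford_mul_pow (γ κ : ℝ) (d : ℕ) (W : ℝ) :
    HasSum (fun m : ℕ => besselCliffordCoeff γ m * κ ^ m * (W ^ d) ^ m)
      (besselClifford γ (κ * W ^ d)) := by
  simpa only [mul_pow, mul_assoc] using hasSum_besselClifford γ (κ * W ^ d)

lemma integral_rpow_mul_exp_neg_div_mul_besselClifford {γ t : ℝ} (hγ : -1 < γ) (ht : 0 < t)
    (κ : ℝ) :
    ∫ W in Ioi 0, W ^ γ * Real.exp (-(W / t)) * besselClifford γ (κ * W)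
      = t ^ (γ + 1) * Real.exp (κ * t) := by
  have h := hasSum_integral_rpow_mul_exp_neg_div_mul (d := 1) (h := fun _ => 1) (B := 1) hγ ht
    (fun W _ => hasSum_besselClifford_mul_pow γ κ 1 W) continuous_const (by simp)
    (summable_besselCliffordCoeff_mul_Gamma hγ ht κ)
  have hexp := (NormedSpace.expSeries_div_hasSum_exp (κ * t)).mul_left (t ^ (γ + 1))
  rw [← Real.exp_eq_exp_ℝ] at hexp
  simp only [mul_one, pow_one] at h
  refine h.unique (hexp.congr_fun fun m => ?_)
  have hm : -1 < γ + (1 : ℕ) * m := by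
    have : (0 : ℝ) ≤ m := m.cast_nonneg
    push_cast
    linarith
  rw [integral_rpow_mul_exp_neg_div hm ht, rpow_add_natCast_mul_add_one ht, Nat.cast_one, one_mul,
    pow_one, mul_pow]
  linear_combination t ^ (γ + 1) * t ^ m * κ ^ m * besselCliffordCoeff_mul_Gamma hγ m

lemma abs_besselClifford_neg_mul_le {γ y : ℝ} (hγ : -1 / 2 ≤ γ) (hy : 0 ≤ y) {W : ℝ}
    (hW : 0 < W) : |besselClifford γ (-y * W)| ≤ 1 / Real.Gamma (γ + 1) := by
  rw [neg_mul]
  exact abs_besselClifford_neg_le hγ (by positivity)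

lemma integral_rpow_add_natCast_mul_exp_neg_div_mul_besselClifford {β t y : ℝ}
    (hβ : -1 / 2 ≤ β) (ht : 0 < t) (hy : 0 ≤ y) (n : ℕ) :
    ∫ W in Ioi 0, W ^ (β + n) * Real.exp (-(W / t)) * besselClifford β (-y * W)
      = Real.Gamma (β + n + 1) * (t ^ (β + n + 1) * Real.exp (-y * t)
        * ∑ i ∈ Finset.range (n + 1),
          (n.choose i : ℝ) * (1 / Real.Gamma (i + β + 1)) * (-y * t) ^ i) := by
  have hΓ : 0 < Real.Gamma (β + n + 1) := Real.Gamma_pos_of_pos (by linarith)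
  have hexpand : ∀ W ∈ Ioi (0 : ℝ),
      W ^ (β + n) * Real.exp (-(W / t)) * besselClifford β (-y * W)
        = ∑ i ∈ Finset.range (n + 1), Real.Gamma (β + n + 1) * ((n.choose i : ℝ)
          * (1 / Real.Gamma (i + β + 1)) * (-y) ^ i)
          * (W ^ (β + n + i) * Real.exp (-(W / t)) * besselClifford (β + n + i) (-y * W)) := by
    intro W hW
    have hadd : besselClifford β (-y * W) = Real.Gamma (β + n + 1) * ∑ i ∈ Finset.range (n + 1),
        (n.choose i : ℝ) * (1 / Real.Gamma (i + β + 1)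
          * ((-y * W) ^ i * besselClifford (β + n + i) (-y * W))) := by
      rw [sum_choose_mul_besselClifford]
      field_simp
    rw [hadd, Finset.mul_sum, Finset.mul_sum]
    refine Finset.sum_congr rfl fun i _ => ?_
    rw [Real.rpow_add_natCast (mem_Ioi.1 hW).ne' (β + n) i, mul_pow]
    ring
  rw [setIntegral_congr_fun measurableSet_Ioi hexpand, integral_finsetSum, Finset.mul_sum,
    Finset.mul_sum]
  · refine Finset.sum_congr rfl fun i _ => ?_
    rw [integral_const_mul,
      integral_rpow_mul_exp_neg_div_mul_besselClifford (by linarith) ht, mul_pow,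
      add_right_comm (β + n) (i : ℝ) 1, Real.rpow_add_natCast ht.ne']
    ring
  · intro i _
    exact (integrableOn_rpow_mul_exp_neg_div_mul (by linarith) ht (by fun_prop)
      fun W hW => abs_besselClifford_neg_mul_le (by linarith) hy hW).const_mul _

lemma besselCliffordCoeff_mul_sum_choose {β t : ℝ} (hβ : -1 < β) (ht : 0 < t) (y η : ℝ) (n : ℕ) :
    besselCliffordCoeff β n * (-η) ^ n * (Real.Gamma (β + n + 1) * (t ^ (β + n + 1)
        * Real.exp (-y * t) * ∑ i ∈ Finset.range (n + 1),
          (n.choose i : ℝ) * (1 / Real.Gamma (i + β + 1)) * (-y * t) ^ i))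
      = t ^ (β + 1) * Real.exp (-y * t) * ∑ i ∈ Finset.range (n + 1),
          besselCliffordCoeff β i * (y * η * t ^ 2) ^ i
            * ((-η * t) ^ (n - i) / (n - i).factorial) := by
  have hterm : ∀ i ∈ Finset.range (n + 1),
      besselCliffordCoeff β i * (y * η * t ^ 2) ^ i * ((-η * t) ^ (n - i) / (n - i).factorial)
        = 1 / n.factorial * ((-η) ^ n * t ^ n) * ((n.choose i : ℝ) * (1 / Real.Gamma (i + β + 1))
          * (-y * t) ^ i) := by
    intro i hi
    obtain ⟨k, rfl⟩ := Nat.exists_eq_add_of_le (Finset.mem_range_succ_iff.1 hi)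
    rw [Nat.cast_choose ℝ (Nat.le_add_right i k), Nat.add_sub_cancel_left, besselCliffordCoeff,
      show y * η * t ^ 2 = -η * t * (-y * t) by ring, mul_pow (-η * t) (-y * t)]
    field_simp
    ring
  rw [Finset.sum_congr rfl hterm, ← Finset.mul_sum, add_right_comm β (n : ℝ) 1,
    Real.rpow_add_natCast ht.ne', add_right_comm β (1 : ℝ) (n : ℝ)]
  linear_combination (-η) ^ n * (t ^ (β + 1) * t ^ n) * Real.exp (-y * t)
    * (∑ i ∈ Finset.range (n + 1),
      (n.choose i : ℝ) * (1 / Real.Gamma (i + β + 1)) * (-y * t) ^ i)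
    * besselCliffordCoeff_mul_Gamma hβ n

/-- Weber's second exponential integral. Expanding the second factor in powers of `W` gives the
Cauchy product of the series of `𝒞_β(yηt²)` and of `exp(-ηt)`. -/
lemma integral_rpow_mul_exp_neg_div_mul_besselClifford_mul_besselClifford {β t y : ℝ}
    (hβ : -1 / 2 ≤ β) (ht : 0 < t) (hy : 0 ≤ y) (η : ℝ) :
    ∫ W in Ioi 0, W ^ β * Real.exp (-(W / t)) * besselClifford β (-η * W)
        * besselClifford β (-y * W)
      = t ^ (β + 1) * Real.exp (-((y + η) * t)) * besselClifford β (y * η * t ^ 2) := by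
  have hβ₁ : -1 < β := by linarith
  have h := hasSum_integral_rpow_mul_exp_neg_div_mul (d := 1) hβ₁ ht
    (fun W _ => hasSum_besselClifford_mul_pow β (-η) 1 W)
    (by fun_prop : Continuous fun W => besselClifford β (-y * W))
    (fun W hW => abs_besselClifford_neg_mul_le hβ hy hW)
    (summable_besselCliffordCoeff_mul_Gamma hβ₁ ht (-η))
  have hcauchy := (hasSum_sum_range_mul_of_summable_norm
    (summable_norm_besselClifford β (y * η * t ^ 2))
    (NormedSpace.norm_expSeries_div_summable (𝔸 := ℝ) (-η * t))).mul_left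
      (t ^ (β + 1) * Real.exp (-y * t))
  rw [(NormedSpace.expSeries_div_hasSum_exp (-η * t)).tsum_eq, ← Real.exp_eq_exp_ℝ] at hcauchy
  simp only [pow_one, Nat.cast_one, one_mul,
    integral_rpow_add_natCast_mul_exp_neg_div_mul_besselClifford hβ ht hy] at h
  rw [h.unique (hcauchy.congr_fun fun n => besselCliffordCoeff_mul_sum_choose hβ₁ ht y η n),
    show -((y + η) * t) = -y * t + -η * t by ring, Real.exp_add, besselClifford]
  ring

lemma Gamma_add_natCast_eq_factorial_mul_multichoose {a : ℝ} (ha : 0 < a) (m : ℕ) :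
    Real.Gamma (a + m) = m.factorial * Ring.multichoose a m * Real.Gamma a := by
  rw [← nsmul_eq_mul, Ring.factorial_nsmul_multichoose_eq_ascPochhammer,
    Polynomial.ascPochhammer_smeval_eq_eval]
  induction m with
  | zero => simp
  | succ m ih =>
    rw [ascPochhammer_succ_eval, Nat.cast_succ, ← add_assoc,
      Real.Gamma_add_one (by positivity), ih]
    ring

lemma hasSum_Gamma_add_natCast_div_factorial_mul_pow {a q : ℝ} (ha : 0 < a) (hq : |q| < 1) :
    HasSum (fun m : ℕ => Real.Gamma (a + m) / m.factorial * q ^ m)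
      (Real.Gamma a * (1 - q) ^ (-a)) := by
  have h := ((Real.one_div_one_sub_rpow_hasFPowerSeriesOnBall_zero a).hasSum (y := q)
    (by simpa [enorm_eq_nnnorm, ← NNReal.coe_lt_coe] using hq)).mul_left (Real.Gamma a)
  rw [zero_add, one_div, ← Real.rpow_neg (by linarith [le_abs_self q])] at h
  refine h.congr_fun fun m => ?_
  rw [Gamma_add_natCast_eq_factorial_mul_multichoose ha, FormalMultilinearSeries.ofScalars_apply_eq,
    Ring.multichoose_eq, smul_eq_mul]
  field_simp

lemma integral_rpow_mul_exp_neg_div_mul_besselClifford_mul_sq {β δ a K t κ : ℝ} (hδ : -1 < δ)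
    (ha : 0 < a) (ht : 0 < t) (hκ : |4 * κ * t ^ 2| < 1)
    (hcoeff : ∀ m : ℕ, besselCliffordCoeff β m * Real.Gamma (δ + 2 * m + 1)
      = K * 4 ^ m * (Real.Gamma (a + m) / m.factorial)) :
    ∫ s in Ioi 0, s ^ δ * Real.exp (-(s / t)) * besselClifford β (κ * s ^ 2)
      = K * t ^ (δ + 1) * (Real.Gamma a * (1 - 4 * κ * t ^ 2) ^ (-a)) := by
  have hδm (m : ℕ) : -1 < δ + 2 * m := by
    have : (0 : ℝ) ≤ m := m.cast_nonneg
    linarith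
  have hterm (m : ℕ) : besselCliffordCoeff β m * κ ^ m
      * (t ^ (δ + (2 : ℕ) * m + 1) * Real.Gamma (δ + 2 * m + 1))
        = K * t ^ (δ + 1) * (Real.Gamma (a + m) / m.factorial * (4 * κ * t ^ 2) ^ m) := by
    rw [rpow_add_natCast_mul_add_one ht, mul_pow (4 * κ), mul_pow 4 κ]
    linear_combination κ ^ m * t ^ (δ + 1) * (t ^ 2) ^ m * hcoeff m
  have hbinom := (hasSum_Gamma_add_natCast_div_factorial_mul_pow ha hκ).mul_left (K * t ^ (δ + 1))
  have h := hasSum_integral_rpow_mul_exp_neg_div_mul (d := 2) (h := fun _ => 1) (B := 1) hδ ht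
    (fun s _ => hasSum_besselClifford_mul_pow β κ 2 s) continuous_const (by simp) (by
      refine hbinom.summable.norm.congr fun m => ?_
      have hpos := mul_pos (Real.rpow_pos_of_pos ht (δ + 2 * m + 1))
        (Real.Gamma_pos_of_pos (by linarith [hδm m] : 0 < δ + 2 * m + 1))
      rw [← hterm, norm_mul, Real.norm_eq_abs, Nat.cast_ofNat, Real.norm_of_nonneg hpos.le])
  simp only [mul_one, Nat.cast_ofNat] at h
  refine h.unique (hbinom.congr_fun fun m => ?_)
  rw [integral_rpow_mul_exp_neg_div (hδm m) ht, ← hterm, Nat.cast_ofNat]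

lemma integral_rpow_mul_exp_neg_mul_mul_besselClifford_mul_sq {β δ a K u κ : ℝ} (hδ : -1 < δ)
    (ha : 0 < a) (hu : 0 < u) (hκ : 0 ≤ κ) (hκu : 4 * κ < u ^ 2)
    (hcoeff : ∀ m : ℕ, besselCliffordCoeff β m * Real.Gamma (δ + 2 * m + 1)
      = K * 4 ^ m * (Real.Gamma (a + m) / m.factorial)) :
    ∫ s in Ioi 0, s ^ δ * Real.exp (-(u * s)) * besselClifford β (κ * s ^ 2)
      = K * u ^ (2 * a - δ - 1) * (Real.Gamma a * (u ^ 2 - 4 * κ) ^ (-a)) := by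
  have hq : 1 - 4 * κ * u⁻¹ ^ 2 = (u ^ 2 - 4 * κ) * u ^ (-2 : ℝ) := by
    rw [Real.rpow_neg hu.le, Real.rpow_two]
    field_simp
  have hq₁ : 4 * κ * u⁻¹ ^ 2 < 1 := by
    rw [inv_pow, ← div_eq_mul_inv]
    exact (div_lt_one (by positivity)).2 hκu
  have h := integral_rpow_mul_exp_neg_div_mul_besselClifford_mul_sq (κ := κ) hδ ha (inv_pos.2 hu)
    (by rwa [abs_of_nonneg (by positivity)]) hcoeff
  simp only [div_inv_eq_mul, mul_comm _ u] at h
  rw [h, hq, Real.mul_rpow (by linarith) (by positivity), ← Real.rpow_mul hu.le,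
    Real.inv_rpow hu.le, ← Real.rpow_neg hu.le,
    show 2 * a - δ - 1 = -(δ + 1) + -2 * -a by ring, Real.rpow_add hu]
  ring

lemma besselCliffordCoeff_mul_Gamma_two_mul {β : ℝ} (hβ : -1 < β) (m : ℕ) :
    besselCliffordCoeff β m * Real.Gamma (2 * β + 2 * m + 1)
      = 4 ^ β / √π * 4 ^ m * (Real.Gamma (β + 1 / 2 + m) / m.factorial) := by
  have hΓ : 0 < Real.Gamma (m + β + 1) := Real.Gamma_pos_of_pos (by linarith)
  have h := four_rpow_mul_Gamma_mul_Gamma (β + m)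
  rw [Real.rpow_add_natCast four_ne_zero, show β + m + 1 / 2 = β + 1 / 2 + m by ring,
    show β + m + 1 = m + β + 1 by ring, show 2 * (β + m) + 1 = 2 * β + 2 * m + 1 by ring] at h
  rw [besselCliffordCoeff]
  generalize Real.Gamma (2 * β + 2 * m + 1) = G at h ⊢
  generalize Real.Gamma (β + 1 / 2 + m) = G' at h ⊢
  field_simp
  linarith

lemma besselCliffordCoeff_mul_Gamma_two_mul_add_one {β : ℝ} (hβ : -1 < β) (m : ℕ) :
    besselCliffordCoeff β m * Real.Gamma (2 * β + 1 + 2 * m + 1)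
      = 2 * 4 ^ β / √π * 4 ^ m * (Real.Gamma (β + 3 / 2 + m) / m.factorial) := by
  have hΓ : 0 < Real.Gamma (m + β + 1) := Real.Gamma_pos_of_pos (by linarith)
  have h := four_rpow_mul_Gamma_mul_Gamma (β + 1 / 2 + m)
  rw [Real.rpow_add_natCast four_ne_zero, Real.rpow_add four_pos, ← Real.sqrt_eq_rpow,
    show (4 : ℝ) = 2 ^ 2 by norm_num, Real.sqrt_sq zero_le_two,
    show (2 : ℝ) ^ 2 = 4 by norm_num, show β + 1 / 2 + m + 1 / 2 = m + β + 1 by ring,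
    show β + 1 / 2 + m + 1 = β + 3 / 2 + m by ring,
    show 2 * (β + 1 / 2 + m) + 1 = 2 * β + 1 + 2 * m + 1 by ring] at h
  rw [besselCliffordCoeff]
  generalize Real.Gamma (2 * β + 1 + 2 * m + 1) = G at h ⊢
  generalize Real.Gamma (β + 3 / 2 + m) = G' at h ⊢
  field_simp
  linarith

lemma integral_rpow_two_mul_mul_exp_neg_mul_mul_besselClifford {β u κ : ℝ} (hβ : -1 / 2 < β)
    (hu : 0 < u) (hκ : 0 ≤ κ) (hκu : 4 * κ < u ^ 2) :
    ∫ s in Ioi 0, s ^ (2 * β) * Real.exp (-(u * s)) * besselClifford β (κ * s ^ 2)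
      = 4 ^ β / √π * (Real.Gamma (β + 1 / 2) * (u ^ 2 - 4 * κ) ^ (-(β + 1 / 2))) := by
  rw [integral_rpow_mul_exp_neg_mul_mul_besselClifford_mul_sq (by linarith) (by linarith) hu hκ hκu
    (besselCliffordCoeff_mul_Gamma_two_mul (by linarith)),
    show 2 * (β + 1 / 2) - 2 * β - 1 = 0 by ring, Real.rpow_zero, mul_one]

lemma integral_rpow_two_mul_add_one_mul_exp_neg_mul_mul_besselClifford {β u κ : ℝ} (hβ : -1 < β)
    (hu : 0 < u) (hκ : 0 ≤ κ) (hκu : 4 * κ < u ^ 2) :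
    ∫ s in Ioi 0, s ^ (2 * β + 1) * Real.exp (-(u * s)) * besselClifford β (κ * s ^ 2)
      = 2 * 4 ^ β / √π * u * (Real.Gamma (β + 3 / 2) * (u ^ 2 - 4 * κ) ^ (-(β + 3 / 2))) := by
  rw [integral_rpow_mul_exp_neg_mul_mul_besselClifford_mul_sq (by linarith) (by linarith) hu hκ hκu
    (besselCliffordCoeff_mul_Gamma_two_mul_add_one hβ),
    show 2 * (β + 3 / 2) - (2 * β + 1) - 1 = 1 by ring, Real.rpow_one]

lemma hasDerivAt_integral_mul_besselClifford_neg_mul {g : ℝ → ℝ} {γ y : ℝ} (hγ : -1 / 2 ≤ γ)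
    (hy : 0 < y) (hg : IntegrableOn g (Ioi 0)) (hg₁ : IntegrableOn (fun W => W * g W) (Ioi 0)) :
    HasDerivAt (fun y => ∫ W in Ioi 0, g W * besselClifford γ (-y * W))
      (-∫ W in Ioi 0, W * g W * besselClifford (γ + 1) (-y * W)) y := by
  have hmeas (γ y : ℝ) : AEStronglyMeasurable (fun W => besselClifford γ (-y * W))
      (volume.restrict (Ioi 0)) :=
    (by fun_prop : Continuous fun W => besselClifford γ (-y * W)).aestronglyMeasurable
  rw [← integral_neg]
  refine (hasDerivAt_integral_of_dominated_loc_of_deriv_le (μ := volume.restrict (Ioi 0))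
    (F' := fun y W => -(W * g W * besselClifford (γ + 1) (-y * W)))
    (bound := fun W => ‖W * g W‖ * (1 / Real.Gamma (γ + 1 + 1)))
    (Ioi_mem_nhds hy) (Eventually.of_forall fun y => hg.aestronglyMeasurable.mul (hmeas γ y))
    (hg.mul_bdd (hmeas γ y) ((ae_restrict_iff' measurableSet_Ioi).2 (Eventually.of_forall
      fun W hW => abs_besselClifford_neg_mul_le hγ hy.le hW)))
    (hg₁.aestronglyMeasurable.mul (hmeas (γ + 1) y)).neg ?_ (hg₁.norm.mul_const _) ?_).2
  · refine (ae_restrict_iff' measurableSet_Ioi).2 (Eventually.of_forall fun W hW x hx => ?_)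
    rw [norm_neg, norm_mul]
    exact mul_le_mul_of_nonneg_left
      (abs_besselClifford_neg_mul_le (by linarith) (le_of_lt hx) hW) (norm_nonneg _)
  · refine (ae_restrict_iff' measurableSet_Ioi).2 (Eventually.of_forall fun W _ x _ => ?_)
    have hlin : HasDerivAt (fun x => -x * W) (-1 * W) x := (hasDerivAt_id x).fun_neg.mul_const W
    refine (((hasDerivAt_besselClifford γ (-x * W)).comp x hlin).const_mul (g W)).congr_deriv ?_
    ring

lemma integral_mul_rpow_mul_exp_neg_div_mul_besselClifford_mul_besselClifford {β t y η : ℝ}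
    (hβ : -1 / 2 ≤ β) (ht : 0 < t) (hy : 0 < y) (hη : 0 ≤ η) :
    ∫ W in Ioi 0, W * (W ^ β * Real.exp (-(W / t)) * besselClifford β (-η * W))
        * besselClifford (β + 1) (-y * W)
      = t ^ (β + 1) * Real.exp (-((y + η) * t))
        * (t * besselClifford β (y * η * t ^ 2)
          - η * t ^ 2 * besselClifford (β + 1) (y * η * t ^ 2)) := by
  have hint (p : ℝ) (hp : -1 < p) := integrableOn_rpow_mul_exp_neg_div_mul hp ht
    (by fun_prop : Continuous fun W => besselClifford β (-η * W))
    (fun W hW => abs_besselClifford_neg_mul_le hβ hη hW)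
  have hleft := hasDerivAt_integral_mul_besselClifford_neg_mul hβ hy (hint β (by linarith))
    ((hint (β + 1) (by linarith)).congr_fun (fun W hW => by
      simp only [Real.rpow_add_one (mem_Ioi.1 hW).ne']
      ring) measurableSet_Ioi)
  have hexp : HasDerivAt (fun y => -((y + η) * t)) (-(1 * t)) y :=
    (((hasDerivAt_id y).add_const η).mul_const t).fun_neg
  have harg : HasDerivAt (fun y => y * η * t ^ 2) (1 * η * t ^ 2) y :=
    ((hasDerivAt_id y).mul_const η).mul_const _
  have hright := (hexp.exp.const_mul (t ^ (β + 1))).fun_mul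
    ((hasDerivAt_besselClifford β (y * η * t ^ 2)).comp y harg)
  have h := hleft.unique (hright.congr_of_eventuallyEq (by
    filter_upwards [Ioi_mem_nhds hy] with y hy
    exact integral_rpow_mul_exp_neg_div_mul_besselClifford_mul_besselClifford hβ ht
      (le_of_lt hy) η))
  simp only [Function.comp_apply] at h
  linear_combination -h

end Laplace

/-! ### The functions `∂_z^M (z² + c)^{-l}` -/

section GegenbauerKernel

/-- The `k`-th summand of `gegenbauerKernel l M z c` up to the factor `M!`. -/
noncomputable def gegenbauerKernelTerm (l : ℝ) (M k : ℕ) (z c : ℝ) : ℝ :=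
  (-1) ^ k * Real.Gamma (l + M - k) / k.factorial * dividedMonomial M k (2 * z)
    * (z ^ 2 + c) ^ (-l - M + k)

/-- The function `Γ(l) (-∂_z)^M (z² + c)^{-l}`, extended to `l = 0` for `M > 0`. It is a rescaled
Gegenbauer polynomial. -/
noncomputable def gegenbauerKernel (l : ℝ) (M : ℕ) (z c : ℝ) : ℝ :=
  M.factorial * ∑ k ∈ Finset.range (M + 1), gegenbauerKernelTerm l M k z c

lemma hasDerivAt_dividedMonomial (n k : ℕ) (x : ℝ) :
    HasDerivAt (dividedMonomial n k) (dividedMonomial (n + 1) (k + 1) x) x := by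
  simpa only [funext (dividedMonomial_add_two_succ n k)]
    using hasDerivAt_dividedMonomial_succ (n + 1) (k + 1) x

lemma sub_mul_Gamma_mul_dividedMonomial {l : ℝ} {M : ℕ} (hl : 0 ≤ l) (hlM : 0 < l + M) (k : ℕ)
    (x : ℝ) :
    (l + M - k) * Real.Gamma (l + M - k) * dividedMonomial M k x
      = Real.Gamma (l + (M + 1 : ℕ) - k) * dividedMonomial M k x := by
  rcases lt_or_ge M (2 * k) with hk | hk
  · rw [dividedMonomial_of_lt hk, mul_zero, mul_zero]
  · have hk₂ : (2 : ℝ) * k ≤ M := by exact_mod_cast hk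
    have hpos : 0 < l + M - k := by
      have : (0 : ℝ) ≤ k := k.cast_nonneg
      linarith
    rw [← Real.Gamma_add_one hpos.ne']
    push_cast
    ring_nf

lemma hasDerivAt_gegenbauerKernelTerm {l z c : ℝ} {M : ℕ} (hl : 0 ≤ l) (hlM : 0 < l + M)
    (hz : 0 < z ^ 2 + c) (k : ℕ) :
    HasDerivAt (fun z => gegenbauerKernelTerm l M k z c)
      (-(2 * ((k + 1 : ℕ) : ℝ) * gegenbauerKernelTerm l (M + 1) (k + 1) z c
        + ((M : ℝ) + 1 - 2 * k) * gegenbauerKernelTerm l (M + 1) k z c)) z := by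
  have hmono := (hasDerivAt_dividedMonomial M k (2 * z)).comp z ((hasDerivAt_id z).const_mul 2)
  have hpow := (((hasDerivAt_id z).fun_pow 2).add_const c).rpow_const (p := -l - M + k)
    (Or.inl hz.ne')
  refine ((hmono.const_mul ((-1) ^ k * Real.Gamma (l + M - k) / k.factorial)).fun_mul
    hpow).congr_deriv ?_
  have hΓ := sub_mul_Gamma_mul_dividedMonomial hl hlM k (2 * z)
  have hmul := mul_dividedMonomial M k (2 * z)
  simp only [gegenbauerKernelTerm, Function.comp_apply, id]
  rw [show l + (M + 1 : ℕ) - (k + 1 : ℕ) = l + M - k by push_cast; ring,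
    show -l - (M + 1 : ℕ) + (k + 1 : ℕ) = -l - M + k by push_cast; ring,
    show -l - M + k - 1 = -l - (M + 1 : ℕ) + k by push_cast; ring, Nat.factorial_succ]
  generalize Real.Gamma (l + M - k) = G at hΓ ⊢
  generalize Real.Gamma (l + (M + 1 : ℕ) - k) = G' at hΓ ⊢
  generalize (z ^ 2 + c) ^ (-l - (M + 1 : ℕ) + k : ℝ) = S
  generalize (z ^ 2 + c) ^ (-l - M + k : ℝ) = S'
  push_cast
  field_simp
  rw [pow_succ]
  linear_combination -(2 * z * (-1) ^ k * S) * hΓ - (-1) ^ k * S * G' * hmul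

lemma hasDerivAt_gegenbauerKernel {l z c : ℝ} {M : ℕ} (hl : 0 ≤ l) (hlM : 0 < l + M)
    (hz : 0 < z ^ 2 + c) :
    HasDerivAt (fun z => gegenbauerKernel l M z c) (-gegenbauerKernel l (M + 1) z c) z := by
  refine ((HasDerivAt.fun_sum (u := Finset.range (M + 1)) fun k _ =>
    hasDerivAt_gegenbauerKernelTerm hl hlM hz k).const_mul (M.factorial : ℝ)).congr_deriv ?_
  have htop : gegenbauerKernelTerm l (M + 1) (M + 1) z c = 0 := by
    rw [gegenbauerKernelTerm, dividedMonomial_of_lt (by omega)]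
    ring
  have hshift := Finset.sum_range_succ'
    (fun k : ℕ => (2 : ℝ) * k * gegenbauerKernelTerm l (M + 1) k z c) (M + 1)
  have hsum : ∑ k ∈ Finset.range (M + 1),
      (2 * ((k + 1 : ℕ) : ℝ) * gegenbauerKernelTerm l (M + 1) (k + 1) z c
        + ((M : ℝ) + 1 - 2 * k) * gegenbauerKernelTerm l (M + 1) k z c)
      = (M + 1) * ∑ k ∈ Finset.range (M + 1 + 1), gegenbauerKernelTerm l (M + 1) k z c := by
    rw [Finset.sum_range_succ _ (M + 1), htop] at hshift
    rw [Finset.sum_add_distrib, Finset.sum_range_succ _ (M + 1), htop, add_zero, Finset.mul_sum]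
    simp only [mul_zero, Nat.cast_zero, zero_mul, add_zero] at hshift
    rw [← hshift, ← Finset.sum_add_distrib]
    exact Finset.sum_congr rfl fun k _ => by ring
  rw [Finset.sum_neg_distrib, hsum, gegenbauerKernel, Nat.factorial_succ]
  push_cast
  ring

lemma gegenbauerKernel_eq_gegenbauerCt (l : ℝ) (M : ℕ) {R z c : ℝ} (hR : 0 < R)
    (hz : z ^ 2 + c = R ^ 2) :
    gegenbauerKernel l M z c
      = M.factorial * (R ^ (-(M + 2 * l)) * gegenbauerCt M l (z / R)) := by
  rw [gegenbauerKernel, gegenbauerCt_eq_sum_dividedMonomial (M := M + 1) (by omega),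
    Finset.mul_sum (Finset.range (M + 1)) _ (R ^ _)]
  congr 1
  refine Finset.sum_congr rfl fun k _ => ?_
  have hscale := dividedMonomial_mul M k R (2 * (z / R))
  rw [show R * (2 * (z / R)) = 2 * z by field_simp] at hscale
  have hpow : (R ^ 2) ^ (-l - M + k) * R ^ M = R ^ (-(M + 2 * l)) * R ^ (2 * k) := by
    rw [← Real.rpow_natCast R 2, ← Real.rpow_mul hR.le, ← Real.rpow_natCast, ← Real.rpow_natCast,
      ← Real.rpow_add hR, ← Real.rpow_add hR]
    push_cast
    ring_nf
  rw [gegenbauerKernelTerm, hz]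
  have hR₁ : 0 < R ^ (2 * k) := by positivity
  refine mul_right_cancel₀ hR₁.ne' ?_
  linear_combination ((-1) ^ k * Real.Gamma (l + M - k) / k.factorial)
    * ((R ^ 2) ^ (-l - M + k) * hscale + dividedMonomial M k (2 * (z / R)) * hpow)

end GegenbauerKernel

/-! ### Bessel moments of Macdonald functions -/

section BesselMoment

lemma integral_rpow_mul_macdonald_neg_mul {p β P B : ℝ} {h : ℝ → ℝ} (hp : -1 < p)
    (hβ : -β - 1 < p) (hP : 0 < P) (hh : Continuous h) (hB : ∀ W > 0, |h W| ≤ B) :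
    ∫ W in Ioi 0, W ^ p * macdonald (-β) (P * W) * h W
      = 1 / 2 * ∫ s in Ioi 0, macdonaldKernel (-β) 0 s
        * ∫ W in Ioi 0, W ^ p * Real.exp (-(P / s * W)) * h W := by
  have hbound : ∀ᵐ z : ℝ × ℝ ∂(volume.restrict (Ioi 0)).prod (volume.restrict (Ioi 0)),
      ‖h z.1‖ ≤ B := by
    rw [Measure.prod_restrict]
    exact (ae_restrict_iff' (measurableSet_Ioi.prod measurableSet_Ioi)).2
      (Eventually.of_forall fun z hz => hB z.1 hz.1)
  have hint := (integrable_prod_rpow_mul_macdonaldKernel hp hβ hP).mul_bdd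
    (hh.comp continuous_fst).aestronglyMeasurable hbound
  calc
    _ = 1 / 2 * ∫ W in Ioi 0, ∫ s in Ioi 0, W ^ p * macdonaldKernel (-β) (P * W) s * h W := by
      rw [← integral_const_mul]
      refine integral_congr_ae (Eventually.of_forall fun W => ?_)
      simp only [macdonald, integral_mul_const, integral_const_mul]
      ring
    _ = _ := by
      rw [integral_integral_swap hint]
      simp only [rpow_mul_macdonaldKernel_mul, mul_assoc, integral_const_mul]

/-- The substitution `s = P t` turns the Macdonald kernel into the Laplace kernel
`exp (-W / t)`, for which the Weber integrals are available. -/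
lemma integral_rpow_add_mul_macdonald_mul {p β P B : ℝ} {h : ℝ → ℝ} (hp : -1 < p)
    (hβ : -β - 1 < p) (hP : 0 < P) (hh : Continuous h) (hB : ∀ W > 0, |h W| ≤ B) :
    ∫ W in Ioi 0, W ^ (p + β) * macdonald β (P * W) * h W
      = 1 / 2 * ∫ t in Ioi 0, t ^ (β - 1) * Real.exp (-(P * t))
        * ∫ W in Ioi 0, W ^ p * Real.exp (-(W / t)) * h W := by
  have hPβ : P ^ (-β) * P ^ β = 1 := by rw [← Real.rpow_add hP, neg_add_cancel, Real.rpow_zero]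
  have hneg : ∫ W in Ioi 0, W ^ (p + β) * macdonald β (P * W) * h W
      = P ^ (-β) * ∫ W in Ioi 0, W ^ p * macdonald (-β) (P * W) * h W := by
    rw [← integral_const_mul]
    refine setIntegral_congr_fun measurableSet_Ioi fun W hW => ?_
    have hW₀ : 0 < W := hW
    simp only [macdonald_neg β (mul_pos hP hW₀), Real.mul_rpow hP.le hW₀.le, Real.rpow_add hW₀]
    linear_combination -(W ^ p * W ^ β * macdonald β (P * W) * h W) * hPβ
  have hsubst := integral_comp_mul_left_Ioi (fun s => macdonaldKernel (-β) 0 s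
        * ∫ W in Ioi 0, W ^ p * Real.exp (-(P / s * W)) * h W) 0 hP
  rw [mul_zero, smul_eq_mul, eq_inv_mul_iff_mul_eq₀ hP.ne', ← integral_const_mul] at hsubst
  rw [hneg, integral_rpow_mul_macdonald_neg_mul hp hβ hP hh hB, ← hsubst, mul_left_comm,
    ← integral_const_mul]
  congr 1
  refine setIntegral_congr_fun measurableSet_Ioi fun t ht => ?_
  have ht₀ : 0 < t := ht
  have harg (W : ℝ) : P / (P * t) * W = W / t := by field_simp
  simp only [macdonaldKernel_zero, neg_neg, harg]
  rw [Real.mul_rpow hP.le ht₀.le, Real.rpow_sub_one hP.ne']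
  field_simp
  linear_combination (∫ W in Ioi 0, W ^ p * Real.exp (-(W / t)) * h W) * hPβ

/-- The integral of `W ^ (2 β + M)` against the product of the Macdonald function
`macdonald β (P W)` and two Bessel-Clifford functions of orders `β` and `β + M`; a Bessel moment
in the variable `W = x² / 4`. -/
noncomputable def besselMoment (β η : ℝ) (M : ℕ) (P y : ℝ) : ℝ :=
  ∫ W in Ioi 0, W ^ (2 * β + M) * macdonald β (P * W) * besselClifford β (-η * W)
    * besselClifford (β + M) (-y * W)

lemma integrableOn_rpow_mul_macdonald_mul_besselClifford {β η P p : ℝ} (hβ : -1 / 2 ≤ β)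
    (hη : 0 ≤ η) (hP : 0 < P) (hp : -1 < p) (hβp : β - 1 < p) :
    IntegrableOn (fun W => W ^ p * macdonald β (P * W) * besselClifford β (-η * W)) (Ioi 0) :=
  (integrableOn_rpow_mul_macdonald hp hβp hP).mul_bdd
    (by fun_prop : Continuous fun W => besselClifford β (-η * W)).aestronglyMeasurable
    ((ae_restrict_iff' measurableSet_Ioi).2 (Eventually.of_forall fun _ hW =>
      abs_besselClifford_neg_mul_le hβ hη hW))

lemma abs_besselClifford_neg_mul_mul_le {β γ y η : ℝ} (hβ : -1 / 2 ≤ β) (hγ : -1 / 2 ≤ γ)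
    (hy : 0 ≤ y) (hη : 0 ≤ η) {W : ℝ} (hW : 0 < W) :
    |besselClifford β (-η * W) * besselClifford γ (-y * W)|
      ≤ 1 / Real.Gamma (β + 1) * (1 / Real.Gamma (γ + 1)) := by
  have hΓ : 0 < Real.Gamma (β + 1) := Real.Gamma_pos_of_pos (by linarith)
  rw [abs_mul]
  exact mul_le_mul (abs_besselClifford_neg_mul_le hβ hη hW)
    (abs_besselClifford_neg_mul_le hγ hy hW) (abs_nonneg _) (by positivity)

lemma besselMoment_eq_integral {β η P y : ℝ} (hβ : -1 / 2 ≤ β) (hη : 0 ≤ η) (M : ℕ)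
    (hM : 0 < 2 * β + M + 1) (hP : 0 < P) (hy : 0 ≤ y) :
    besselMoment β η M P y = 1 / 2 * ∫ t in Ioi 0, t ^ (β - 1) * Real.exp (-(P * t))
      * ∫ W in Ioi 0, W ^ (β + M) * Real.exp (-(W / t))
        * (besselClifford β (-η * W) * besselClifford (β + M) (-y * W)) := by
  rw [← integral_rpow_add_mul_macdonald_mul (by linarith) (by linarith) hP (by fun_prop)
    fun W => abs_besselClifford_neg_mul_mul_le hβ (by linarith) hy hη, besselMoment]
  simp only [mul_assoc, show 2 * β + M = β + M + β by ring]

lemma sq_add_mul_pos {P y η : ℝ} (hP : 0 < P) (hy : 0 < y) (hη : 0 ≤ η) :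
    0 < (y + P - η) ^ 2 + 4 * P * η := by
  rcases hη.eq_or_lt with rfl | hη
  · rw [sub_zero, mul_zero, add_zero]
    positivity
  · positivity

lemma besselMoment_zero {β η P y : ℝ} (hβ : -1 / 2 < β) (hη : 0 ≤ η) (hP : 0 < P) (hy : 0 < y) :
    besselMoment β η 0 P y
      = 4 ^ β / (2 * √π) * gegenbauerKernel (β + 1 / 2) 0 (y + P - η) (4 * P * η) := by
  have hS := sq_add_mul_pos hP hy hη
  have hker : gegenbauerKernel (β + 1 / 2) 0 (y + P - η) (4 * P * η)
      = Real.Gamma (β + 1 / 2) * ((y + P - η) ^ 2 + 4 * P * η) ^ (-(β + 1 / 2)) := by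
    simp [gegenbauerKernel, gegenbauerKernelTerm, dividedMonomial]
  have hlap := integral_rpow_two_mul_mul_exp_neg_mul_mul_besselClifford (β := β)
    (u := P + y + η) (κ := y * η) hβ (by positivity) (by positivity) (by linarith)
  rw [besselMoment_eq_integral hβ.le hη 0 (by simp; linarith) hP hy.le, hker,
    show (y + P - η) ^ 2 + 4 * P * η = (P + y + η) ^ 2 - 4 * (y * η) by ring]
  calc
    _ = 1 / 2 * ∫ t in Ioi 0, t ^ (2 * β) * Real.exp (-((P + y + η) * t))
        * besselClifford β (y * η * t ^ 2) := by
      congr 1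
      refine setIntegral_congr_fun measurableSet_Ioi fun t ht => ?_
      have ht₀ : 0 < t := ht
      have hweber := integral_rpow_mul_exp_neg_div_mul_besselClifford_mul_besselClifford
        hβ.le ht₀ hy.le η
      simp only [Nat.cast_zero, add_zero, ← mul_assoc]
      rw [hweber, show 2 * β = β - 1 + (β + 1) by ring, Real.rpow_add ht₀ (β - 1),
        show -((P + y + η) * t) = -(P * t) + -((y + η) * t) by ring, Real.exp_add]
      ring
    _ = _ := by
      rw [hlap]
      ring

lemma besselMoment_one_eq_integral {β η P y : ℝ} (hβ : -1 / 2 ≤ β) (hη : 0 ≤ η) (hP : 0 < P)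
    (hy : 0 < y) :
    besselMoment β η 1 P y = 1 / 2 * ∫ t in Ioi 0,
      (t ^ (2 * β + 1) * Real.exp (-((P + y + η) * t)) * besselClifford β (y * η * t ^ 2)
        - η * (t ^ (2 * (β + 1)) * Real.exp (-((P + y + η) * t))
          * besselClifford (β + 1) (y * η * t ^ 2))) := by
  rw [besselMoment_eq_integral hβ hη 1 (by push_cast; linarith) hP hy.le]
  congr 1
  refine setIntegral_congr_fun measurableSet_Ioi fun t ht => ?_
  have ht₀ : 0 < t := ht
  have hweber : ∫ W in Ioi 0, W ^ (β + (1 : ℕ)) * Real.exp (-(W / t))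
        * (besselClifford β (-η * W) * besselClifford (β + (1 : ℕ)) (-y * W))
      = t ^ (β + 1) * Real.exp (-((y + η) * t)) * (t * besselClifford β (y * η * t ^ 2)
        - η * t ^ 2 * besselClifford (β + 1) (y * η * t ^ 2)) := by
    rw [← integral_mul_rpow_mul_exp_neg_div_mul_besselClifford_mul_besselClifford hβ ht₀ hy hη]
    refine setIntegral_congr_fun measurableSet_Ioi fun W hW => ?_
    simp only [Nat.cast_one, Real.rpow_add_one (mem_Ioi.1 hW).ne']
    ring
  simp only [hweber]
  rw [show 2 * β + 1 = β - 1 + (β + 1) + 1 by ring,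
    show 2 * (β + 1) = β - 1 + (β + 1) + 1 + 1 by ring, Real.rpow_add_one ht₀.ne' (_ + 1),
    Real.rpow_add_one ht₀.ne' (β - 1 + (β + 1)), Real.rpow_add ht₀ (β - 1),
    show -((P + y + η) * t) = -(P * t) + -((y + η) * t) by ring, Real.exp_add]
  ring

/-- For `β = -1/2` the moment of index `0` diverges, so the index `1` cannot be obtained from it by
differentiation. -/
lemma besselMoment_one {β η P y : ℝ} (hβ : -1 / 2 ≤ β) (hη : 0 ≤ η) (hP : 0 < P) (hy : 0 < y) :
    besselMoment β η 1 P y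
      = 4 ^ β / (2 * √π) * gegenbauerKernel (β + 1 / 2) 1 (y + P - η) (4 * P * η) := by
  have hS := sq_add_mul_pos hP hy hη
  have hS₁ : 4 * (y * η) < (P + y + η) ^ 2 := by linarith
  have hu : 0 < P + y + η := by positivity
  have hker : gegenbauerKernel (β + 1 / 2) 1 (y + P - η) (4 * P * η) = Real.Gamma (β + 3 / 2)
      * (2 * (y + P - η)) * ((y + P - η) ^ 2 + 4 * P * η) ^ (-(β + 3 / 2)) := by
    simp [gegenbauerKernel, gegenbauerKernelTerm, dividedMonomial, Finset.sum_range_succ]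
    ring_nf
  have hlap₁ := integral_rpow_two_mul_add_one_mul_exp_neg_mul_mul_besselClifford (β := β)
    (by linarith) hu (by positivity) hS₁
  have hlap₂ := integral_rpow_two_mul_mul_exp_neg_mul_mul_besselClifford (β := β + 1)
    (by linarith) hu (by positivity) hS₁
  rw [show β + 1 + 1 / 2 = β + 3 / 2 by ring] at hlap₂
  have hΓ : 0 < Real.Gamma (β + 3 / 2) := Real.Gamma_pos_of_pos (by linarith)
  have hpow : 0 < ((P + y + η) ^ 2 - 4 * (y * η)) ^ (-(β + 3 / 2)) :=
    Real.rpow_pos_of_pos (by linarith) _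
  have hint₁ := Integrable.of_integral_ne_zero (hlap₁.trans_ne (by positivity))
  have hint₂ := Integrable.of_integral_ne_zero (hlap₂.trans_ne (by positivity))
  rw [besselMoment_one_eq_integral hβ hη hP hy, integral_sub hint₁ (hint₂.const_mul η),
    integral_const_mul, hlap₁, hlap₂, hker, Real.rpow_add_one four_ne_zero,
    show (y + P - η) ^ 2 + 4 * P * η = (P + y + η) ^ 2 - 4 * (y * η) by ring]
  ring

lemma hasDerivAt_besselMoment {β η P y : ℝ} {M : ℕ} (hβ : -1 / 2 ≤ β) (hM : 0 < β + 1 / 2 + M)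
    (hη : 0 ≤ η) (hP : 0 < P) (hy : 0 < y) :
    HasDerivAt (besselMoment β η M P) (-besselMoment β η (M + 1) P y) y := by
  have hsucc {W : ℝ} (hW : 0 < W) : W ^ (2 * β + (M + 1 : ℕ)) = W ^ (2 * β + M) * W := by
    rw [← Real.rpow_add_one hW.ne', Nat.cast_succ, add_assoc]
  refine (hasDerivAt_integral_mul_besselClifford_neg_mul (γ := β + M) (by linarith) hy
    (integrableOn_rpow_mul_macdonald_mul_besselClifford hβ hη hP (by linarith) (by linarith))
    ((integrableOn_rpow_mul_macdonald_mul_besselClifford (p := 2 * β + (M + 1 : ℕ)) hβ hη hP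
      (by push_cast; linarith) (by push_cast; linarith)).congr_fun (fun W hW => ?_)
      measurableSet_Ioi)).congr_deriv ?_
  · simp only [hsucc hW]
    ring
  · rw [besselMoment]
    congr 1
    refine setIntegral_congr_fun measurableSet_Ioi fun W hW => ?_
    simp only [hsucc (mem_Ioi.1 hW)]
    simp only [Nat.cast_succ, ← add_assoc]
    ring

lemma besselMoment_eq {β η P : ℝ} (hβ : -1 / 2 ≤ β) (hη : 0 ≤ η) (hP : 0 < P) {M : ℕ}
    (hM : 0 < β + 1 / 2 + M) {y : ℝ} (hy : 0 < y) :
    besselMoment β η M P y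
      = 4 ^ β / (2 * √π) * gegenbauerKernel (β + 1 / 2) M (y + P - η) (4 * P * η) := by
  induction M generalizing y with
  | zero => exact besselMoment_zero (by simp at hM; linarith) hη hP hy
  | succ M ih =>
    rcases Nat.eq_zero_or_pos M with rfl | hM₀
    · exact besselMoment_one hβ hη hP hy
    · have hM₁ : 0 < β + 1 / 2 + M := by
        have : (1 : ℝ) ≤ M := by exact_mod_cast hM₀
        linarith
      have hshift : HasDerivAt (fun y => y + P - η) 1 y :=
        ((hasDerivAt_id y).add_const P).sub_const η
      have hker := ((hasDerivAt_gegenbauerKernel (by linarith) hM₁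
        (sq_add_mul_pos hP hy hη)).comp y hshift).const_mul (4 ^ β / (2 * √π))
      have h := (hasDerivAt_besselMoment hβ hM₁ hη hP hy).unique
        (hker.congr_of_eventuallyEq (by
          filter_upwards [Ioi_mem_nhds hy] with x hx
          exact ih hM₁ hx))
      linear_combination -h

end BesselMoment

/-! ### The kernels of the generating function -/

section GeneratingKernel

open scoped ContDiff Topology

lemma contDiffOn_inv_one_sub_pow (k : ℕ) :
    ContDiffOn ℝ ∞ (fun t : ℝ => ((1 - t) ^ k)⁻¹) (Iio 1) :=
  ContDiffOn.inv (by fun_prop) fun _ ht => pow_ne_zero k (sub_pos.2 ht).ne'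

lemma contDiffOn_one_sub_rpow (c : ℝ) : ContDiffOn ℝ ∞ (fun t : ℝ => (1 - t) ^ c) (Iio 1) :=
  ContDiffOn.rpow_const_of_ne (by fun_prop) fun _ ht => (sub_pos.2 ht).ne'

/-- The factor `P(t) = (1 - t)⁻²` by which the generating function dilates the argument of its
Macdonald factor, in the variable `W = x² / 4`. -/
noncomputable def macdonaldScale (t : ℝ) : ℝ := ((1 - t) ^ 2)⁻¹

/-- The factor `Q(t) = t² (1 - t)⁻²` by which the generating function dilates the argument of its
Bessel factor, in the variable `W = x² / 4`. -/
noncomputable def besselScale (t : ℝ) : ℝ := t ^ 2 * ((1 - t) ^ 2)⁻¹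

lemma macdonaldScale_pos {t : ℝ} (ht : t < 1) : 0 < macdonaldScale t :=
  inv_pos.2 (pow_pos (sub_pos.2 ht) 2)

lemma besselScale_zero : besselScale 0 = 0 := by simp [besselScale]

lemma hasDerivAt_macdonaldScale {t : ℝ} (ht : t < 1) :
    HasDerivAt macdonaldScale (2 * ((1 - t) ^ 3)⁻¹) t := by
  have h₀ : 1 - t ≠ 0 := (sub_pos.2 ht).ne'
  refine ((((hasDerivAt_id t).const_sub 1).pow 2).inv (pow_ne_zero 2 h₀)).congr_deriv ?_
  simp only [Pi.pow_apply, id]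
  field_simp
  norm_num [mul_comm]

lemma hasDerivAt_besselScale {t : ℝ} (ht : t < 1) :
    HasDerivAt besselScale (2 * t * ((1 - t) ^ 3)⁻¹) t := by
  have h₀ : 1 - t ≠ 0 := (sub_pos.2 ht).ne'
  refine ((hasDerivAt_pow 2 t).mul (hasDerivAt_macdonaldScale ht)).congr_deriv ?_
  simp only [macdonaldScale]
  field_simp
  norm_num
  ring

lemma contDiffOn_macdonaldScale : ContDiffOn ℝ ∞ macdonaldScale (Iio 1) :=
  contDiffOn_inv_one_sub_pow 2

lemma contDiffOn_besselScale : ContDiffOn ℝ ∞ besselScale (Iio 1) :=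
  ContDiffOn.mul (by fun_prop) (contDiffOn_inv_one_sub_pow 2)

lemma contDiffOn_deriv_macdonaldScale :
    ContDiffOn ℝ ∞ (fun t : ℝ => 2 * ((1 - t) ^ 3)⁻¹) (Iio 1) :=
  contDiffOn_const.mul (contDiffOn_inv_one_sub_pow 3)

lemma contDiffOn_deriv_besselScale :
    ContDiffOn ℝ ∞ (fun t : ℝ => 2 * t * ((1 - t) ^ 3)⁻¹) (Iio 1) :=
  ContDiffOn.mul (by fun_prop) (contDiffOn_inv_one_sub_pow 3)

/-- The range of `t` in which the Bessel factor `C_a (-(y - Q(t)) W)` does not grow with `W`. -/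
def scaleDomain (y : ℝ) : Set ℝ := Iio 1 ∩ besselScale ⁻¹' Iio y

lemma isOpen_scaleDomain (y : ℝ) : IsOpen (scaleDomain y) :=
  contDiffOn_besselScale.continuousOn.isOpen_inter_preimage isOpen_Iio isOpen_Iio

lemma zero_mem_scaleDomain {y : ℝ} (hy : 0 < y) : (0 : ℝ) ∈ scaleDomain y :=
  ⟨mem_Iio.2 one_pos, by simpa [besselScale_zero] using hy⟩

/-- The integrand obtained from the generating function after multiplication by a Bessel function,
times an auxiliary factor `g`. The index `i` counts the differentiations of its Bessel and
Macdonald factors. -/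
noncomputable def generatingKernel (g : ℝ → ℝ) (a β p y : ℝ) (i : ℕ × ℕ) (t W : ℝ) : ℝ :=
  W ^ (p + i.1 + i.2) * macdonald (β + i.2) (macdonaldScale t * W)
    * besselClifford (a + i.1) (-(y - besselScale t) * W) * g W

lemma isDerivFamily_generatingKernel (g : ℝ → ℝ) (a β p y : ℝ) {W : ℝ} (hW : 0 < W) {U : Set ℝ}
    (hU : U ⊆ Iio 1) :
    IsDerivFamily U (fun t => 2 * t * ((1 - t) ^ 3)⁻¹) (fun t => -(2 * ((1 - t) ^ 3)⁻¹))
      (fun i : ℕ × ℕ => (i.1 + 1, i.2)) (fun i => (i.1, i.2 + 1))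
      fun i t => generatingKernel g a β p y i t W := by
  intro i t ht
  have hP : HasDerivAt (fun t => macdonaldScale t * W) (2 * ((1 - t) ^ 3)⁻¹ * W) t :=
    (hasDerivAt_macdonaldScale (hU ht)).mul_const W
  have hQ : HasDerivAt (fun t => -(y - besselScale t) * W) (2 * t * ((1 - t) ^ 3)⁻¹ * W) t :=
    (((hasDerivAt_besselScale (hU ht)).const_sub y).fun_neg.mul_const W).congr_deriv (by ring)
  have hK := (hasDerivAt_macdonald (β + i.2)
    (mul_pos (macdonaldScale_pos (hU ht)) hW)).comp t hP
  have hC := (hasDerivAt_besselClifford (a + i.1) (-(y - besselScale t) * W)).comp t hQ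
  refine (((hK.const_mul (W ^ (p + i.1 + i.2))).mul hC).mul_const (g W)).congr_deriv ?_
  have hW₁ : W ^ (p + (i.1 + 1) + i.2) = W ^ (p + i.1 + i.2) * W := by
    rw [← Real.rpow_add_one hW.ne']
    ring_nf
  have hW₂ : W ^ (p + i.1 + (i.2 + 1)) = W ^ (p + i.1 + i.2) * W := by
    rw [← Real.rpow_add_one hW.ne', add_assoc (p + i.1)]
  simp only [generatingKernel, Nat.cast_succ, hW₁, hW₂, Function.comp_apply]
  simp only [← add_assoc]
  ring

variable {g : ℝ → ℝ} {a β p y B t : ℝ}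

lemma abs_generatingKernel_le (ha : -1 / 2 ≤ a) (hB : ∀ W, 0 < W → |g W| ≤ B) (i : ℕ × ℕ)
    {P₀ W : ℝ} (hP₀ : 0 < P₀) (hP : P₀ ≤ macdonaldScale t) (hQ : besselScale t ≤ y) (hW : 0 < W) :
    |generatingKernel g a β p y i t W|
      ≤ W ^ (p + i.1 + i.2) * macdonald (β + i.2) (P₀ * W)
        * (1 / Real.Gamma (a + i.1 + 1) * B) := by
  have hC := abs_besselClifford_neg_mul_le (γ := a + i.1) (by linarith) (sub_nonneg.2 hQ) hW
  have hK := macdonald_anti (β + i.2) (mul_pos hP₀ hW) (mul_le_mul_of_nonneg_right hP hW.le)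
  have hK₀ := macdonald_nonneg (β + i.2) (P₀ * W)
  rw [generatingKernel, abs_mul, abs_mul, abs_mul, abs_of_nonneg (macdonald_nonneg _ _),
    abs_of_pos (Real.rpow_pos_of_pos hW _), mul_assoc _ |_|]
  gcongr
  exacts [(abs_nonneg _).trans hC, hB W hW]

lemma aestronglyMeasurable_generatingKernel (hg : Continuous g) (i : ℕ × ℕ) (ht : t < 1) :
    AEStronglyMeasurable (generatingKernel g a β p y i t) (volume.restrict (Ioi 0)) := by
  refine ContinuousOn.aestronglyMeasurable ?_ measurableSet_Ioi
  refine ((ContinuousOn.mul ?_ ?_).mul ?_).mul hg.continuousOn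
  · exact fun W hW => (continuousAt_rpow_const _ _ (Or.inl (ne_of_gt hW))).continuousWithinAt
  · exact (contDiffOn_macdonald (β + i.2)).continuousOn.comp (by fun_prop)
      fun W hW => mul_pos (macdonaldScale_pos ht) hW
  · fun_prop

lemma integrableOn_generatingKernel_bound (hp : -1 < p) (hβp : β - 1 < p) (i : ℕ × ℕ) {P₀ : ℝ}
    (hP₀ : 0 < P₀) (C : ℝ) :
    IntegrableOn (fun W => W ^ (p + i.1 + i.2) * macdonald (β + i.2) (P₀ * W) * C) (Ioi 0) := by
  exact (integrableOn_rpow_mul_macdonald (by linarith) (by linarith) hP₀).mul_const _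

lemma integrableOn_generatingKernel (ha : -1 / 2 ≤ a) (hp : -1 < p) (hβp : β - 1 < p)
    (hg : Continuous g) (hB : ∀ W, 0 < W → |g W| ≤ B) (ht : t < 1) (hQ : besselScale t ≤ y)
    (i : ℕ × ℕ) : IntegrableOn (generatingKernel g a β p y i t) (Ioi 0) := by
  refine (integrableOn_generatingKernel_bound hp hβp i (macdonaldScale_pos ht)
    (1 / Real.Gamma (a + i.1 + 1) * B)).mono'
    (aestronglyMeasurable_generatingKernel hg i ht) ?_
  filter_upwards [ae_restrict_mem measurableSet_Ioi] with W hW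
  exact abs_generatingKernel_le ha hB i (macdonaldScale_pos ht) le_rfl hQ hW

lemma isDerivFamily_integral_generatingKernel (ha : -1 / 2 ≤ a) (hp : -1 < p) (hβp : β - 1 < p)
    (hg : Continuous g) (hB : ∀ W, 0 < W → |g W| ≤ B) :
    IsDerivFamily (scaleDomain y) (fun t => 2 * t * ((1 - t) ^ 3)⁻¹)
      (fun t => -(2 * ((1 - t) ^ 3)⁻¹)) (fun i : ℕ × ℕ => (i.1 + 1, i.2)) (fun i => (i.1, i.2 + 1))
      fun i t => ∫ W in Ioi 0, generatingKernel g a β p y i t W := by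
  refine isDerivFamily_integral_of_locally_dominated ?_ (isOpen_scaleDomain y)
    (contDiffOn_deriv_besselScale.continuousOn.mono inter_subset_left)
    (contDiffOn_deriv_macdonaldScale.neg.continuousOn.mono inter_subset_left)
    (fun i t ht => aestronglyMeasurable_generatingKernel hg i ht.1) fun i t ht => ?_
  · filter_upwards [ae_restrict_mem measurableSet_Ioi] with W hW
    exact isDerivFamily_generatingKernel g a β p y hW inter_subset_left
  · have hP₀ : 0 < macdonaldScale t / 2 := half_pos (macdonaldScale_pos ht.1)
    have hP : ∀ᶠ s in 𝓝 t, macdonaldScale t / 2 < macdonaldScale s :=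
      (hasDerivAt_macdonaldScale ht.1).continuousAt.eventually_const_lt
        (half_lt_self (macdonaldScale_pos ht.1))
    refine ⟨_, inter_mem ((isOpen_scaleDomain y).mem_nhds ht) hP, _,
      integrableOn_generatingKernel_bound hp hβp i hP₀ (1 / Real.Gamma (a + i.1 + 1) * B), ?_⟩
    filter_upwards [ae_restrict_mem measurableSet_Ioi] with W hW s hs
    exact abs_generatingKernel_le ha hB i hP₀ (le_of_lt hs.2) (le_of_lt hs.1.2) hW

lemma integrableOn_iteratedDeriv_mul_generatingKernel (ha : -1 / 2 ≤ a) (hp : -1 < p)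
    (hβp : β - 1 < p) (hg : Continuous g) (hB : ∀ W, 0 < W → |g W| ≤ B) (ht : t < 1)
    (hQ : besselScale t ≤ y) (j : ℕ) {f : ℝ → ℝ} (hf : ContDiffOn ℝ ∞ f (Iio 1)) :
    IntegrableOn
      (fun W => iteratedDeriv j (fun s => f s * generatingKernel g a β p y (0, 0) s W) t)
      (Ioi 0) := by
  refine integrable_iteratedDeriv_mul_of_isDerivFamily
    ((ae_restrict_mem measurableSet_Ioi).mono fun W hW =>
      isDerivFamily_generatingKernel g a β p y hW Subset.rfl)
    isOpen_Iio contDiffOn_deriv_besselScale contDiffOn_deriv_macdonaldScale.neg ht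
    (integrableOn_generatingKernel ha hp hβp hg hB ht hQ) j (0, 0) hf

lemma integral_iteratedDeriv_mul_generatingKernel (ha : -1 / 2 ≤ a) (hp : -1 < p)
    (hβp : β - 1 < p) (hg : Continuous g) (hB : ∀ W, 0 < W → |g W| ≤ B) (ht : t ∈ scaleDomain y)
    (j : ℕ) {f : ℝ → ℝ} (hf : ContDiffOn ℝ ∞ f (Iio 1)) :
    ∫ W in Ioi 0, iteratedDeriv j (fun s => f s * generatingKernel g a β p y (0, 0) s W) t
      = iteratedDeriv j
        (fun s => f s * ∫ W in Ioi 0, generatingKernel g a β p y (0, 0) s W) t := by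
  refine integral_iteratedDeriv_mul_of_isDerivFamily
    ((ae_restrict_mem measurableSet_Ioi).mono fun W hW =>
      isDerivFamily_generatingKernel g a β p y hW inter_subset_left)
    (isDerivFamily_integral_generatingKernel ha hp hβp hg hB) (isOpen_scaleDomain y)
    (contDiffOn_deriv_besselScale.mono inter_subset_left)
    (contDiffOn_deriv_macdonaldScale.neg.mono inter_subset_left) ht
    (integrableOn_generatingKernel ha hp hβp hg hB ht.1 (le_of_lt ht.2)) j (0, 0)
    (hf.mono inter_subset_left)

end GeneratingKernel

/-! ### Products of the eigenfunctions with Bessel functions -/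

section LambdaJet

open scoped ContDiff

lemma contDiff_mul_pow_mul_besselClifford_add (i : ℕ) (α c d v : ℝ) :
    ContDiff ℝ ∞ fun u => c * (d * (u ^ i * besselClifford α (u + v))) :=
  contDiff_const.mul (contDiff_const.mul ((contDiff_id.pow i).mul
    ((contDiff_besselClifford α).comp (contDiff_id.add contDiff_const))))

lemma iteratedDeriv_sum_pow_mul_besselClifford_add (α v : ℝ) {j l : ℕ} (hl : l ≤ j) :
    iteratedDeriv l (fun u => ∑ i ∈ Finset.range (j + 1), besselCliffordCoeff α i * (v ^ i
        * (u ^ i * besselClifford (α + 2 * i) (u + v)))) 0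
      = besselClifford α v * (1 / Real.Gamma (α + l + 1)) := by
  have hC (i : ℕ) : ContDiff ℝ ∞ fun u => besselClifford (α + 2 * i) (u + v) :=
    (contDiff_besselClifford _).comp (contDiff_id.add contDiff_const)
  rw [iteratedDeriv_fun_sum fun i _ => (contDiff_mul_pow_mul_besselClifford_add i _ _ _
    v).contDiffAt.of_le (by exact_mod_cast le_top), ← sum_choose_mul_besselClifford]
  symm
  rw [← Finset.sum_subset (Finset.range_subset_range.2 (Nat.succ_le_succ hl))]
  · refine Finset.sum_congr rfl fun i hi => ?_
    have hil : i ≤ l := Finset.mem_range_succ_iff.1 hi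
    have hcoeff : besselCliffordCoeff α i * i.factorial = 1 / Real.Gamma (i + α + 1) := by
      rw [besselCliffordCoeff]
      field_simp
    have hshift : iteratedDeriv (l - i) (fun u => besselClifford (α + 2 * i) (u + v)) 0
        = besselClifford (α + 2 * i + (l - i : ℕ)) v := by
      simp only [iteratedDeriv_comp_add_const, iteratedDeriv_besselClifford, zero_add]
    rw [iteratedDeriv_const_mul_field, iteratedDeriv_const_mul_field, iteratedDeriv_pow_mul_zero _ _
      ((hC i).contDiffAt.of_le (by exact_mod_cast le_top)), hshift, ← hcoeff, Nat.cast_sub hil,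
      show α + 2 * i + ((l : ℝ) - i) = α + l + i by ring]
    ring
  · intro i _ hi
    have hil : l < i := by simpa using hi
    rw [iteratedDeriv_const_mul_field, iteratedDeriv_const_mul_field, iteratedDeriv_pow_mul_zero _ _
      ((hC i).contDiffAt.of_le (by exact_mod_cast le_top)), Nat.choose_eq_zero_of_lt hil]
    simp

/-- The `j`-th derivative at `t = 0` of the generating function `G^{2α,2β}(t, x)`, as a function of
`W = x² / 4`. -/
noncomputable def lambdaJet (α β : ℝ) (j : ℕ) (W : ℝ) : ℝ :=
  iteratedDeriv j (fun t => (1 - t) ^ (-(α + β + 1)) * besselClifford α (besselScale t * W)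
    * macdonald β (macdonaldScale t * W)) 0

lemma contDiffOn_rpow_mul_macdonald (c β : ℝ) {W : ℝ} (hW : 0 < W) :
    ContDiffOn ℝ ∞ (fun t => (1 - t) ^ c * macdonald β (macdonaldScale t * W)) (Iio 1) :=
  (contDiffOn_one_sub_rpow c).mul ((contDiffOn_macdonald β).comp
    (contDiffOn_macdonaldScale.mul contDiffOn_const) fun _ ht => mul_pos (macdonaldScale_pos ht) hW)

/-- The jet of order `j` in `u` at `u = 0` of `C_α(v) C_α(u)` is that of a combination of the
functions `u ^ i * C_{α + 2 i}(u + v)`, which brings the two Bessel factors under a single one. -/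
lemma lambdaJet_mul_besselClifford (α β y : ℝ) (j : ℕ) {W : ℝ} (hW : 0 < W) :
    lambdaJet α β j W * besselClifford α (-y * W)
      = ∑ i ∈ Finset.range (j + 1), iteratedDeriv j (fun t =>
        (1 - t) ^ (-(α + β + 1)) * (besselCliffordCoeff α i * (-y) ^ i * besselScale t ^ i)
          * (W ^ (2 * i) * macdonald β (macdonaldScale t * W)
            * besselClifford (α + 2 * i) (-(y - besselScale t) * W))) 0 := by
  have h₀ : (0 : ℝ) ∈ Iio (1 : ℝ) := by norm_num
  have hg := contDiffOn_rpow_mul_macdonald (-(α + β + 1)) β hW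
  have hQ : ContDiffOn ℝ ∞ (fun t => besselScale t * W) (Iio 1) :=
    contDiffOn_besselScale.mul contDiffOn_const
  have hjet : ∀ l ≤ j, iteratedDeriv l
      (fun u => besselClifford α (-y * W) * besselClifford α u) (besselScale 0 * W)
        = iteratedDeriv l (fun u => ∑ i ∈ Finset.range (j + 1), besselCliffordCoeff α i
          * ((-y * W) ^ i * (u ^ i * besselClifford (α + 2 * i) (u + -y * W))))
          (besselScale 0 * W) := fun l hl => by
    rw [besselScale_zero, zero_mul, iteratedDeriv_sum_pow_mul_besselClifford_add α _ hl,
      iteratedDeriv_const_mul_field, iteratedDeriv_besselClifford, besselClifford_zero]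
  calc
    _ = iteratedDeriv j (fun t => (1 - t) ^ (-(α + β + 1)) * macdonald β (macdonaldScale t * W)
        * (besselClifford α (-y * W) * besselClifford α (besselScale t * W))) 0 := by
      rw [lambdaJet, ← iteratedDeriv_mul_const_field]
      congr with t
      ring
    _ = _ := iteratedDeriv_mul_comp_congr isOpen_Iio hQ hg
      (contDiff_const.mul (contDiff_besselClifford α))
      (ContDiff.sum fun i _ => contDiff_mul_pow_mul_besselClifford_add i _ _ _ _) h₀ hjet
    _ = _ := by
      simp only [Finset.mul_sum]
      refine (iteratedDeriv_fun_sum fun i _ => contDiffAt_natCast_of_contDiffOn (hg.mul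
        ((contDiff_mul_pow_mul_besselClifford_add i _ _ _ _).comp_contDiffOn hQ)) isOpen_Iio h₀
          j).trans ?_
      refine Finset.sum_congr rfl fun i _ => congrArg (iteratedDeriv j · 0) (funext fun t => ?_)
      rw [show -(y - besselScale t) * W = besselScale t * W + -y * W by ring, Function.comp_apply]
      ring

lemma lambdaJet_mul_besselClifford_eq_sum_generatingKernel (α β y : ℝ) (j : ℕ) (g : ℝ → ℝ) {W : ℝ}
    (hW : 0 < W) :
    lambdaJet α β j W * (W ^ (α + β) * g W) * besselClifford α (-y * W)
      = ∑ i ∈ Finset.range (j + 1), iteratedDeriv j (fun t =>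
        (1 - t) ^ (-(α + β + 1)) * (besselCliffordCoeff α i * (-y) ^ i * besselScale t ^ i)
          * generatingKernel g (α + 2 * i) β (α + β + 2 * i) y (0, 0) t W) 0 := by
  rw [mul_right_comm, lambdaJet_mul_besselClifford α β y j hW, Finset.sum_mul]
  refine Finset.sum_congr rfl fun i _ => ?_
  rw [← iteratedDeriv_mul_const_field]
  congr with t
  have hpow : W ^ (α + β + 2 * i) = W ^ (α + β) * W ^ (2 * i) := by
    rw [← Real.rpow_add_natCast hW.ne']
    push_cast
    rfl
  simp only [generatingKernel, Nat.cast_zero, add_zero, hpow]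
  ring

lemma integrableOn_lambdaJet_mul {α β B : ℝ} {g : ℝ → ℝ} (hα : -1 / 2 ≤ α) (hαβ : -1 < α + β)
    (hg : Continuous g) (hB : ∀ W, 0 < W → |g W| ≤ B) (j : ℕ) :
    IntegrableOn (fun W => lambdaJet α β j W * (W ^ (α + β) * g W)) (Ioi 0) := by
  refine (integrableOn_iteratedDeriv_mul_generatingKernel (y := 0) hα hαβ (by linarith) hg hB
    one_pos besselScale_zero.le j (contDiffOn_one_sub_rpow (-(α + β + 1)))).congr_fun
    (fun W _ => ?_) measurableSet_Ioi
  simp only [lambdaJet]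
  rw [← iteratedDeriv_mul_const_field]
  congr with t
  simp only [generatingKernel, Nat.cast_zero, add_zero, zero_sub, neg_neg]
  ring

end LambdaJet

/-! ### The integral of an eigenfunction against two Bessel functions -/

section LambdaJetIntegral

open scoped ContDiff Topology

lemma gegenbauerKernel_div_sq (l : ℝ) (M : ℕ) {r z c : ℝ} (hr : 0 < r) (hz : 0 < z ^ 2 + c) :
    gegenbauerKernel l M (z / r) (c / r ^ 2) = r ^ (M + 2 * l) * gegenbauerKernel l M z c := by
  have hR : 0 < √(z ^ 2 + c) := Real.sqrt_pos.2 hz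
  have hsq : √(z ^ 2 + c) ^ 2 = z ^ 2 + c := Real.sq_sqrt hz.le
  rw [gegenbauerKernel_eq_gegenbauerCt l M hR hsq.symm,
    gegenbauerKernel_eq_gegenbauerCt l M (div_pos hR hr) (by rw [div_pow, div_pow, hsq, add_div]),
    div_div_div_cancel_right₀ hr.ne', Real.div_rpow hR.le hr.le, Real.rpow_neg hr.le]
  field_simp

section KernelJet

variable {l A B c : ℝ} {M : ℕ}

lemma hasDerivAt_gegenbauerKernel_add_mul (hl : 0 ≤ l) (hlM : 0 < l + M) (i : ℕ) {t : ℝ}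
    (ht : 0 < (A + t * B) ^ 2 + c) :
    HasDerivAt (fun t => gegenbauerKernel l (M + i) (A + t * B) c)
      (-B * gegenbauerKernel l (M + (i + 1)) (A + t * B) c) t := by
  have hlin : HasDerivAt (fun t => A + t * B) B t := by
    simpa using ((hasDerivAt_id t).mul_const B).const_add A
  have hlMi : 0 < l + (M + i : ℕ) := by
    push_cast
    linarith [i.cast_nonneg (α := ℝ)]
  refine ((hasDerivAt_gegenbauerKernel hl hlMi ht).comp t hlin).congr_deriv ?_
  rw [← add_assoc]
  ring

lemma isOpen_setOf_sq_add_pos (A B c : ℝ) : IsOpen {t : ℝ | 0 < (A + t * B) ^ 2 + c} :=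
  isOpen_lt continuous_const (by fun_prop)

lemma contDiffAt_gegenbauerKernel_add_mul (hl : 0 ≤ l) (hlM : 0 < l + M) (hA : 0 < A ^ 2 + c)
    (m : ℕ) : ContDiffAt ℝ m (fun t => gegenbauerKernel l M (A + t * B) c) 0 :=
  contDiffAt_natCast_of_contDiffOn (contDiffOn_of_hasDerivAt_shift (isOpen_setOf_sq_add_pos A B c)
    (fun i _ ht => hasDerivAt_gegenbauerKernel_add_mul hl hlM i ht) 0)
    (isOpen_setOf_sq_add_pos A B c) (by simpa using hA) m

lemma iteratedDeriv_gegenbauerKernel_add_mul_zero (hl : 0 ≤ l) (hlM : 0 < l + M)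
    (hA : 0 < A ^ 2 + c) (m : ℕ) :
    iteratedDeriv m (fun t => gegenbauerKernel l M (A + t * B) c) 0
      = (-B) ^ m * gegenbauerKernel l (M + m) A c := by
  have h := iteratedDeriv_of_hasDerivAt_shift (isOpen_setOf_sq_add_pos A B c)
    (fun i _ ht => hasDerivAt_gegenbauerKernel_add_mul hl hlM i ht) m 0
    (t := 0) (by simpa using hA)
  simpa using h

lemma iteratedDeriv_pow_mul_gegenbauerKernel_zero (hl : 0 ≤ l) (hlM : 0 < l + M)
    (hA : 0 < A ^ 2 + c) (i j : ℕ) :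
    iteratedDeriv j (fun t => t ^ (2 * i) * gegenbauerKernel l (M + 2 * i) (A + t * B) c) 0
      = (-1) ^ j * j.factorial * dividedMonomial j i B * gegenbauerKernel l (M + j) A c := by
  have hlMi : 0 < l + (M + 2 * i : ℕ) := by
    push_cast
    linarith [i.cast_nonneg (α := ℝ)]
  rw [iteratedDeriv_pow_mul_zero _ _ (contDiffAt_gegenbauerKernel_add_mul hl hlMi hA j),
    iteratedDeriv_gegenbauerKernel_add_mul_zero hl hlMi hA]
  rcases lt_or_ge j (2 * i) with hij | hij
  · simp [dividedMonomial_of_lt hij, Nat.choose_eq_zero_of_lt hij]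
  · obtain ⟨n, rfl⟩ := Nat.exists_eq_add_of_le hij
    have hchoose : ((2 * i + n).choose (2 * i) : ℝ) * (2 * i).factorial * n.factorial
        = (2 * i + n).factorial := by
      have h := Nat.choose_mul_factorial_mul_factorial hij
      rw [Nat.add_sub_cancel_left] at h
      exact_mod_cast h
    rw [dividedMonomial, if_pos hij, Nat.add_sub_cancel_left, ← hchoose, add_assoc, neg_pow B,
      pow_add, pow_mul]
    field_simp
    norm_num

end KernelJet

section GeneratingIntegral

variable {β η y : ℝ} {n : ℕ}

lemma integral_generatingKernel_eq_besselMoment (β η y : ℝ) (M : ℕ) (t : ℝ) :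
    ∫ W in Ioi 0, generatingKernel (fun W => besselClifford β (-η * W)) (β + M) β (2 * β + M) y
        (0, 0) t W
      = besselMoment β η M (macdonaldScale t) (y - besselScale t) := by
  simp only [generatingKernel, besselMoment, Nat.cast_zero, add_zero]
  congr with W
  ring

lemma one_add_sub_sq_add_pos (hη : 0 ≤ η) (hy : 0 ≤ y) : 0 < (1 + y - η) ^ 2 + 4 * η := by
  nlinarith [sq_nonneg (y - η), mul_nonneg hy hη]

lemma integral_generatingKernel (hβ : -1 / 2 ≤ β) (hη : 0 ≤ η) {M : ℕ} (hM : 0 < β + 1 / 2 + M)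
    {t : ℝ} (ht : t ∈ scaleDomain y) :
    ∫ W in Ioi 0, generatingKernel (fun W => besselClifford β (-η * W)) (β + M) β (2 * β + M) y
        (0, 0) t W
      = 4 ^ β / (2 * √π) * ((1 - t) ^ (2 * β + M + 1)
        * gegenbauerKernel (β + 1 / 2) M (1 + y - η + t * (1 - y + η)) (4 * η)) := by
  have ht₁ : 0 < 1 - t := sub_pos.2 ht.1
  have hy : 0 < y - besselScale t := sub_pos.2 ht.2
  have hP := macdonaldScale_pos ht.1
  have hz : y - besselScale t + macdonaldScale t - η
      = (1 + y - η + t * (1 - y + η)) / (1 - t) := by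
    rw [besselScale, macdonaldScale]
    field_simp
    ring
  have hc : 4 * macdonaldScale t * η = 4 * η / (1 - t) ^ 2 := by
    rw [macdonaldScale]
    field_simp
  have hpos := sq_add_mul_pos hP hy hη
  rw [hz, hc, div_pow, ← add_div, div_pos_iff_of_pos_right (by positivity)] at hpos
  rw [integral_generatingKernel_eq_besselMoment, besselMoment_eq hβ hη hP hM hy, hz, hc,
    gegenbauerKernel_div_sq _ _ ht₁ hpos]
  ring_nf

lemma iteratedDeriv_mul_integral_generatingKernel (hβ : -1 / 2 ≤ β) (hn : 0 < β + 1 / 2 + n)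
    (hη : 0 ≤ η) (hy : 0 < y) (i j : ℕ) (c : ℝ) :
    iteratedDeriv j (fun t => (1 - t) ^ (-(β + n + β + 1)) * (c * besselScale t ^ i)
        * ∫ W in Ioi 0, generatingKernel (fun W => besselClifford β (-η * W)) (β + n + 2 * i) β
          (β + n + β + 2 * i) y (0, 0) t W) 0
      = (-1) ^ j * j.factorial * (4 ^ β / (2 * √π)) * gegenbauerKernel (β + 1 / 2) (n + j)
        (1 + y - η) (4 * η) * (c * dividedMonomial j i (1 - y + η)) := by
  have hni : 0 < β + 1 / 2 + (n + 2 * i : ℕ) := by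
    push_cast
    linarith [i.cast_nonneg (α := ℝ)]
  have hev : (fun t => (1 - t) ^ (-(β + n + β + 1)) * (c * besselScale t ^ i)
        * ∫ W in Ioi 0, generatingKernel (fun W => besselClifford β (-η * W)) (β + n + 2 * i) β
          (β + n + β + 2 * i) y (0, 0) t W)
      =ᶠ[𝓝 0] fun t => 4 ^ β / (2 * √π) * c * (t ^ (2 * i)
        * gegenbauerKernel (β + 1 / 2) (n + 2 * i) (1 + y - η + t * (1 - y + η)) (4 * η)) := by
    filter_upwards [(isOpen_scaleDomain y).mem_nhds (zero_mem_scaleDomain hy)] with t ht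
    have ht₁ : 0 < 1 - t := sub_pos.2 ht.1
    have hint := integral_generatingKernel hβ hη hni ht
    rw [show β + (n + 2 * i : ℕ) = β + n + 2 * i by push_cast; ring,
      show 2 * β + (n + 2 * i : ℕ) = β + n + β + 2 * i by push_cast; ring] at hint
    have hpow : (1 - t) ^ (-(β + n + β + 1)) * (1 - t) ^ (β + n + β + 2 * i + 1)
        = ((1 - t) ^ 2) ^ i := by
      rw [← Real.rpow_add ht₁, ← pow_mul, ← Real.rpow_natCast]
      congr 1
      push_cast
      ring
    have hscale : besselScale t ^ i * ((1 - t) ^ 2) ^ i = t ^ (2 * i) := by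
      rw [← mul_pow, pow_mul, besselScale, inv_mul_cancel_right₀ (by positivity)]
    rw [hint, ← hscale, ← hpow]
    ring
  rw [hev.iteratedDeriv_eq, iteratedDeriv_const_mul_field,
    iteratedDeriv_pow_mul_gegenbauerKernel_zero (by linarith) hn (one_add_sub_sq_add_pos hη hy.le)]
  ring

/-- The value of the integral of an eigenfunction against two Bessel functions, in the variable
`W = x² / 4`. -/
noncomputable def lambdaJetIntegral (β η : ℝ) (n j : ℕ) (y : ℝ) : ℝ :=
  (-1) ^ j * j.factorial * (4 ^ β / (2 * √π))
    * gegenbauerKernel (β + 1 / 2) (n + j) (1 + y - η) (4 * η)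
    * ∑ i ∈ Finset.range (j + 1), besselCliffordCoeff (β + n) i * ((-y) ^ i
      * dividedMonomial j i (1 - y + η))

lemma integral_lambdaJet_mul_of_pos (hβ : -1 / 2 ≤ β) (hn : 0 < β + 1 / 2 + n) (hη : 0 ≤ η)
    (hy : 0 < y) (j : ℕ) :
    ∫ W in Ioi 0, lambdaJet (β + n) β j W * (W ^ (β + n + β) * besselClifford β (-η * W))
        * besselClifford (β + n) (-y * W)
      = lambdaJetIntegral β η n j y := by
  have hi₀ (i : ℕ) : (0 : ℝ) ≤ i := i.cast_nonneg
  have hα (i : ℕ) : -1 / 2 ≤ β + n + 2 * i := by linarith [hi₀ i]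
  have hp (i : ℕ) : -1 < β + n + β + 2 * i := by linarith [hi₀ i]
  have hβp (i : ℕ) : β - 1 < β + n + β + 2 * i := by linarith [hi₀ i]
  have hg : Continuous fun W => besselClifford β (-η * W) := by fun_prop
  have hB (W : ℝ) (hW : 0 < W) := abs_besselClifford_neg_mul_le hβ hη hW
  have hf (i : ℕ) : ContDiffOn ℝ ∞ (fun t => (1 - t) ^ (-(β + n + β + 1))
      * (besselCliffordCoeff (β + n) i * (-y) ^ i * besselScale t ^ i)) (Iio 1) :=
    (contDiffOn_one_sub_rpow _).mul (contDiffOn_const.mul (contDiffOn_besselScale.pow i))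
  have h₀ := zero_mem_scaleDomain hy
  rw [setIntegral_congr_fun measurableSet_Ioi fun W hW =>
      lambdaJet_mul_besselClifford_eq_sum_generatingKernel (β + n) β y j
        (fun W => besselClifford β (-η * W)) hW,
    integral_finsetSum _ fun i _ => integrableOn_iteratedDeriv_mul_generatingKernel (hα i) (hp i)
      (hβp i) hg hB h₀.1 (le_of_lt h₀.2) j (hf i),
    lambdaJetIntegral, Finset.mul_sum]
  refine Finset.sum_congr rfl fun i _ => ?_
  rw [integral_iteratedDeriv_mul_generatingKernel (hα i) (hp i) (hβp i) hg hB h₀ j (hf i),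
    iteratedDeriv_mul_integral_generatingKernel hβ hn hη hy]
  ring

lemma continuousAt_lambdaJetIntegral_zero (hβ : -1 / 2 ≤ β) (hn : 0 < β + 1 / 2 + n) (hη : 0 ≤ η)
    (j : ℕ) : ContinuousAt (lambdaJetIntegral β η n j) 0 := by
  have hnj : 0 < β + 1 / 2 + (n + j : ℕ) := by
    push_cast
    linarith [j.cast_nonneg (α := ℝ)]
  have hker : ContinuousAt (fun y => gegenbauerKernel (β + 1 / 2) (n + j) (1 + y - η) (4 * η)) 0 :=
    (hasDerivAt_gegenbauerKernel (by linarith) hnj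
      (one_add_sub_sq_add_pos hη le_rfl)).continuousAt.comp (f := fun y => 1 + y - η) (by fun_prop)
  have hmono (i : ℕ) : Continuous (dividedMonomial j i) := by
    unfold dividedMonomial
    split_ifs <;> fun_prop
  unfold lambdaJetIntegral
  fun_prop

lemma tendsto_integral_lambdaJet_mul (hβ : -1 / 2 ≤ β) (hn : 0 < β + 1 / 2 + n) (hη : 0 ≤ η)
    (j : ℕ) :
    Tendsto (fun y => ∫ W in Ioi 0, lambdaJet (β + n) β j W
        * (W ^ (β + n + β) * besselClifford β (-η * W)) * besselClifford (β + n) (-y * W))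
      (𝓝[>] 0) (𝓝 (∫ W in Ioi 0, lambdaJet (β + n) β j W
        * (W ^ (β + n + β) * besselClifford β (-η * W)) * besselClifford (β + n) (-0 * W))) := by
  have hα : -1 / 2 ≤ β + n := by linarith
  have hint := integrableOn_lambdaJet_mul (β := β) hα (by linarith)
    (g := fun W => besselClifford β (-η * W)) (by fun_prop)
    (fun W hW => abs_besselClifford_neg_mul_le hβ hη hW) j
  refine tendsto_integral_filter_of_dominated_convergence _
    (.of_forall fun y => hint.aestronglyMeasurable.mul
      (show Continuous fun W => besselClifford (β + n) (-y * W)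
        by fun_prop).aestronglyMeasurable) ?_
    (hint.norm.mul_const (1 / Real.Gamma (β + n + 1))) (.of_forall fun W => ?_)
  · filter_upwards [self_mem_nhdsWithin] with y hy
    filter_upwards [ae_restrict_mem measurableSet_Ioi] with W hW
    rw [norm_mul]
    exact mul_le_mul_of_nonneg_left (abs_besselClifford_neg_mul_le hα (le_of_lt hy) hW)
      (norm_nonneg _)
  · exact (Continuous.tendsto (by fun_prop) 0).mono_left nhdsWithin_le_nhds

lemma integral_lambdaJet_mul (hβ : -1 / 2 ≤ β) (hn : 0 < β + 1 / 2 + n) (hη : 0 ≤ η)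
    (hy : 0 ≤ y) (j : ℕ) :
    ∫ W in Ioi 0, lambdaJet (β + n) β j W * (W ^ (β + n + β) * besselClifford β (-η * W))
        * besselClifford (β + n) (-y * W)
      = lambdaJetIntegral β η n j y := by
  rcases hy.eq_or_lt with rfl | hy₀
  · refine tendsto_nhds_unique (tendsto_integral_lambdaJet_mul hβ hn hη j)
      (((continuousAt_lambdaJetIntegral_zero hβ hn hη j).tendsto.mono_left
        nhdsWithin_le_nhds).congr' ?_)
    filter_upwards [self_mem_nhdsWithin] with y hy
    exact (integral_lambdaJet_mul_of_pos hβ hn hη hy j).symm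
  · exact integral_lambdaJet_mul_of_pos hβ hn hη hy₀ j

end GeneratingIntegral

end LambdaJetIntegral

/-! ### The eigenfunctions and the trigonometric parametrization -/

section Trigonometric

lemma integral_mul_comp_sq_div_four (g : ℝ → ℝ) :
    ∫ x in Ioi (0 : ℝ), x * g (x ^ 2 / 4) = 2 * ∫ W in Ioi 0, g W := by
  have hpow := integral_comp_rpow_Ioi_of_pos (g := fun y => g (1 / 4 * y)) two_pos
  rw [integral_comp_mul_left_Ioi g 0 (by norm_num), mul_zero] at hpow
  rw [show ∫ W in Ioi 0, g W = 1 / 4 * ((1 / 4 : ℝ)⁻¹ • ∫ W in Ioi 0, g W) by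
      rw [smul_eq_mul]; ring, ← hpow, ← mul_assoc, ← integral_const_mul]
  refine setIntegral_congr_fun measurableSet_Ioi fun x _ => ?_
  simp only [smul_eq_mul, Real.rpow_two, show (2 : ℝ) - 1 = 1 by norm_num, Real.rpow_one]
  ring_nf

lemma LambdaF_eq_lambdaJet (μ ν : ℝ) (j : ℕ) {x : ℝ} (hx : 0 < x) :
    LambdaF μ ν j x = lambdaJet (μ / 2) (ν / 2) j (x ^ 2 / 4) / j.factorial := by
  rw [LambdaF, lambdaJet]
  congr 1
  refine EventuallyEq.iteratedDeriv_eq j ?_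
  filter_upwards [Iio_mem_nhds one_pos] with t ht
  have ht₁ : 0 < 1 - t := sub_pos.2 ht
  have hbessel : (t * x / (1 - t)) ^ 2 / 4 = besselScale t * (x ^ 2 / 4) := by
    rw [besselScale]
    field_simp
  have hmacdonald : (x / (1 - t)) ^ 2 / 4 = macdonaldScale t * (x ^ 2 / 4) := by
    rw [macdonaldScale]
    field_simp
  rw [genFun, besselIt_eq_besselClifford, besselKt_eq_macdonald _ (by positivity), hbessel,
    hmacdonald, show -(μ + ν + 2) / 2 = -(μ / 2 + ν / 2 + 1) by ring]

lemma sum_besselCliffordCoeff_mul_dividedMonomial (j : ℕ) {α R c y : ℝ} (hα : -1 / 2 < α)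
    (hy : 4 * y = R ^ 2 * (1 - c ^ 2)) :
    ∑ i ∈ Finset.range (j + 1), besselCliffordCoeff α i * ((-y) ^ i * dividedMonomial j i (R * c))
      = R ^ j * (4 ^ α / (√π * Real.Gamma (j + 2 * α + 1)) * gegenbauerCt j (α + 1 / 2) c) := by
  rw [← gegenbauerSum_eq j hα, gegenbauerSum, Finset.mul_sum]
  refine Finset.sum_congr rfl fun i _ => ?_
  have hmono := dividedMonomial_mul j i R c
  rw [show -y = -((1 - c ^ 2) / 4) * R ^ 2 by linarith, mul_pow, ← pow_mul]
  linear_combination besselCliffordCoeff α i * (-((1 - c ^ 2) / 4)) ^ i * hmono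

lemma rpow_two_mul_add_one {x : ℝ} (hx : 0 < x) (p : ℝ) :
    x ^ (2 * p + 1) = x * (4 ^ p * (x ^ 2 / 4) ^ p) := by
  rw [← Real.mul_rpow (by norm_num) (by positivity), mul_div_cancel₀ _ (by norm_num),
    Real.rpow_add_one hx.ne', Real.rpow_mul hx.le, Real.rpow_two, mul_comm]

lemma integral_LambdaF_mul_besselJt {α β : ℝ} {n : ℕ} (hα : α = β + n) (hβ : -1 / 2 ≤ β)
    (hα₀ : -1 / 2 < α) (j : ℕ) (a b : ℝ) :
    ∫ x in Ioi 0, LambdaF (2 * α) (2 * β) j x * besselJt α (a * x) * besselJt β (b * x)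
        * x ^ (2 * α + 2 * β + 1)
      = 2 * 4 ^ (α + β) / j.factorial * lambdaJetIntegral β (b ^ 2) n j (a ^ 2) := by
  rw [← integral_lambdaJet_mul hβ (by linarith) (sq_nonneg b) (sq_nonneg a), ← hα,
    mul_div_assoc, mul_comm (2 : ℝ) (_ / _), mul_assoc, ← integral_mul_comp_sq_div_four,
    ← integral_const_mul]
  refine setIntegral_congr_fun measurableSet_Ioi fun x hx => ?_
  simp only [LambdaF_eq_lambdaJet _ _ _ hx, besselJt_eq_besselClifford, ← mul_add,
    rpow_two_mul_add_one hx, mul_div_cancel_left₀ _ (two_ne_zero' ℝ)]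
  rw [show -((a * x) ^ 2 / 4) = -a ^ 2 * (x ^ 2 / 4) by ring,
    show -((b * x) ^ 2 / 4) = -b ^ 2 * (x ^ 2 / 4) by ring]
  ring

lemma one_add_sin_div_sq_sub {ϑ φ : ℝ} (hne : cos ϑ + cos φ ≠ 0) :
    1 + (sin ϑ / (cos ϑ + cos φ)) ^ 2 - (sin φ / (cos ϑ + cos φ)) ^ 2
      = 2 / (cos ϑ + cos φ) * cos φ := by
  rw [div_pow, div_pow, sin_sq, sin_sq]
  field_simp
  ring

lemma lambdaJetIntegral_eq_gegenbauerCt {α β : ℝ} {n : ℕ} (hα : α = β + n) (hα₀ : -1 / 2 < α)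
    (j : ℕ) {ϑ φ : ℝ} (hpos : 0 < cos ϑ + cos φ) :
    lambdaJetIntegral β ((sin φ / (cos ϑ + cos φ)) ^ 2) n j ((sin ϑ / (cos ϑ + cos φ)) ^ 2)
      = (-1) ^ j * j.factorial * (n + j).factorial * 4 ^ (α + β)
          / (2 * π * Real.Gamma (j + 2 * α + 1))
        * ((cos ϑ + cos φ) / 2) ^ (α + β + 1) * gegenbauerCt j (α + 1 / 2) (cos ϑ)
        * gegenbauerCt (n + j) (β + 1 / 2) (cos φ) := by
  have hcosφ := one_add_sin_div_sq_sub hpos.ne'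
  have hcosϑ := one_add_sin_div_sq_sub (ϑ := φ) (φ := ϑ) (by linarith)
  rw [add_comm (cos φ)] at hcosϑ
  set s := cos ϑ + cos φ
  set R := 2 / s with hR
  have hR₀ : 0 < R := by positivity
  have hsin (x : ℝ) : 4 * (sin x / s) ^ 2 = R ^ 2 * (1 - cos x ^ 2) := by
    rw [← sin_sq, hR]
    ring
  have hpow : R ^ (-((n + j : ℕ) + 2 * (β + 1 / 2))) * R ^ j = (s / 2) ^ (α + β + 1) := by
    rw [← Real.rpow_add_natCast hR₀.ne', ← inv_div 2 s, Real.inv_rpow hR₀.le,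
      ← Real.rpow_neg hR₀.le, hα]
    push_cast
    ring_nf
  rw [lambdaJetIntegral, hcosφ, sub_add_eq_add_sub, hcosϑ, ← hα,
    sum_besselCliffordCoeff_mul_dividedMonomial j hα₀ (hsin ϑ),
    gegenbauerKernel_eq_gegenbauerCt _ _ hR₀ (by rw [hsin φ]; ring),
    mul_div_cancel_left₀ _ hR₀.ne', ← hpow, Real.rpow_add four_pos]
  field_simp
  rw [Real.sq_sqrt pi_pos.le]
  ring

end Trigonometric

theorem theoremA_Lambda_general (μ ν : ℝ) (n : ℕ) (hν : -1 ≤ ν) (hμ : -1 < μ)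
    (hμν : μ = ν + 2 * n) (j : ℕ) (ϑ φ : ℝ) (hpos : 0 < cos ϑ + cos φ) :
    ∫ x in Ioi 0, LambdaF μ ν j x * besselJt (μ / 2) (sin ϑ / (cos ϑ + cos φ) * x)
        * besselJt (ν / 2) (sin φ / (cos ϑ + cos φ) * x) * x ^ (μ + ν + 1)
      = (-1) ^ j * (2 ^ (2 * (μ + ν)) * Real.Gamma (j + (μ - ν + 2) / 2))
          / (π * Real.Gamma (j + μ + 1))
        * ((cos ϑ + cos φ) / 2) ^ ((μ + ν + 2) / 2) * gegenbauerCt j ((μ + 1) / 2) (cos ϑ)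
        * gegenbauerCt (j + n) ((ν + 1) / 2) (cos φ) := by
  have hα : μ / 2 = ν / 2 + n := by linarith
  have hint := integral_LambdaF_mul_besselJt hα (by linarith) (by linarith) j
    (sin ϑ / (cos ϑ + cos φ)) (sin φ / (cos ϑ + cos φ))
  have hΓ : Real.Gamma (j + (μ - ν + 2) / 2) = (n + j).factorial := by
    rw [← Real.Gamma_nat_eq_factorial, hμν]
    push_cast
    ring_nf
  have hpow : (2 : ℝ) ^ (2 * (μ + ν)) = 4 ^ (μ / 2 + ν / 2) * 4 ^ (μ / 2 + ν / 2) := by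
    rw [← Real.rpow_add four_pos, Real.rpow_mul two_pos.le, Real.rpow_two]
    ring_nf
  rw [lambdaJetIntegral_eq_gegenbauerCt hα (by linarith) j hpos] at hint
  simp only [mul_div_cancel₀ _ (two_ne_zero' ℝ)] at hint
  rw [hint, hΓ, hpow, add_comm n j, add_div, add_div, add_div, add_div]
  field_simp

/-- **Theorem A with explicit constant, for `u = Λ_j^{μ,ν}`.** -/
theorem theoremA_Lambda (μ ν : ℤ) (hcond : IntCond μ ν) (j : ℕ)
    (ϑ φ : ℝ) (hϑ : ϑ ∈ Set.Icc (0 : ℝ) Real.pi) (hφ : φ ∈ Set.Icc (0 : ℝ) Real.pi)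
    (hpos : Real.cos ϑ + Real.cos φ > 0) :
    ∫ x in Set.Ioi (0 : ℝ),
        LambdaF μ ν j x * besselJt ((μ : ℝ) / 2) (Real.sin ϑ / (Real.cos ϑ + Real.cos φ) * x)
          * besselJt ((ν : ℝ) / 2) (Real.sin φ / (Real.cos ϑ + Real.cos φ) * x)
          * x ^ ((μ : ℝ) + ν + 1)
      = (-1) ^ j * ((2 : ℝ) ^ (2 * ((μ : ℝ) + ν)) * Real.Gamma (j + ((μ : ℝ) - ν + 2) / 2))
            / (Real.pi * Real.Gamma (j + (μ : ℝ) + 1))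
          * ((Real.cos ϑ + Real.cos φ) / 2) ^ (((μ : ℝ) + ν + 2) / 2)
          * gegenbauerCt j (((μ : ℝ) + 1) / 2) (Real.cos ϑ)
          * gegenbauerCt (j + ((μ - ν) / 2).toNat) (((ν : ℝ) + 1) / 2) (Real.cos φ) := by
  obtain ⟨hν, hνμ, ⟨r, hr⟩, hne⟩ := hcond
  exact theoremA_Lambda_general μ ν _ (by exact_mod_cast hν) (by exact_mod_cast (by omega : -1 < μ))
    (by exact_mod_cast (by omega : μ = ν + 2 * ((μ - ν) / 2).toNat)) j ϑ φ hpos
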